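/- arXiv:2205.10790 — 7 statements merged into one kernel-verified Lean document; each statement's English description precedes it below -/
import Mathlib

section
/- Let n ≥ 1 be an integer and let f : [0,1] → ℝⁿ be a continuous map that is ℝ-full, i.e. the ℝ-linear span of the image f([0,1]) is all of ℝⁿ. Then for every vector α ∈ ℝⁿ and every ε > 0 there exists a continuous function x : [0,1] → ℝ such that x(0) = x(1) = 0 and ‖∫₀¹ x(s)·f(s) ds − α‖ < ε. -/
open MeasureTheory Set

/-!
A test function `φ` supported in an open set `Ω` is sent to `∫ φ • f`, and this is linear in `φ`.
Modulo a closed subspace containing all these integrals, `f` integrates to zero against every test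
function, hence vanishes almost everywhere by the fundamental lemma of the calculus of variations,
and everywhere on `closure Ω` if it is continuous there. So the span of the values of `f` lies in
the closure of the subspace of all integrals, and in finite dimension in that subspace itself.
-/

open TopologicalSpace
open scoped Distributions ContDiff

section TestFunctions

variable {X : Type*} [NormedAddCommGroup X] [NormedSpace ℝ X] [MeasurableSpace X] [BorelSpace X]
  {E : Type*} [NormedAddCommGroup E] [NormedSpace ℝ E]
  {Ω : Opens X} {f : X → E} {μ : Measure X}

variable (Ω f μ) in
/-- The `E`-valued distribution `φ ↦ ∫ φ • f ∂μ` on `Ω` defined by a function `f : X → E`. It is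
the zero map when `f` is not locally integrable on `Ω`. -/
noncomputable def integralSMulCLM : 𝓓(Ω, ℝ) →L[ℝ] E :=
  TestFunction.integralAgainstBilinCLM (ContinuousLinearMap.lsmul ℝ ℝ) μ f

theorem integralSMulCLM_apply (hf : LocallyIntegrableOn f Ω μ) (φ : 𝓓(Ω, ℝ)) :
    integralSMulCLM Ω f μ φ = ∫ x, φ x • f x ∂μ :=
  TestFunction.integralAgainstBilinCLM_eq_integral hf

theorem integrable_testFunction_smul (hf : LocallyIntegrableOn f Ω μ) (φ : 𝓓(Ω, ℝ)) :
    Integrable (fun x ↦ φ x • f x) μ :=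
  TestFunction.integrable_bilin (ContinuousLinearMap.lsmul ℝ ℝ) hf φ

variable [FiniteDimensional ℝ X]

theorem ae_mem_of_forall_integral_smul_mem [CompleteSpace E] {p : Submodule ℝ E}
    (hp : IsClosed (p : Set E)) (hf : LocallyIntegrableOn f Ω μ)
    (h : ∀ φ : 𝓓(Ω, ℝ), ∫ x, φ x • f x ∂μ ∈ p) : ∀ᵐ x ∂μ, x ∈ Ω → f x ∈ p := by
  have hquot : LocallyIntegrableOn (fun x ↦ p.mkQL (f x)) Ω μ := fun x hx ↦ by
    obtain ⟨s, hs, hfs⟩ := hf x hx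
    exact ⟨s, hs, p.mkQL.integrable_comp hfs⟩
  have hzero (φ : 𝓓(Ω, ℝ)) : ∫ x, φ x • p.mkQL (f x) ∂μ = 0 := calc
    ∫ x, φ x • p.mkQL (f x) ∂μ
    _ = ∫ x, p.mkQL (φ x • f x) ∂μ := by simp only [map_smul]
    _ = p.mkQL (∫ x, φ x • f x ∂μ) :=
      p.mkQL.integral_comp_comm (integrable_testFunction_smul hf φ)
    _ = 0 := (Submodule.Quotient.mk_eq_zero p).2 (h φ)
  filter_upwards [Ω.isOpen.ae_eq_zero_of_integral_contDiff_smul_eq_zero hquot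
    fun g hg hgc hgΩ ↦ hzero ⟨g, hg, hgc, hgΩ⟩] with x hx hxΩ
  exact (Submodule.Quotient.mk_eq_zero p).1 (hx hxΩ)

variable [IsLocallyFiniteMeasure μ] [μ.IsOpenPosMeasure]

theorem mapsTo_closure_of_forall_integral_smul_mem [CompleteSpace E] {p : Submodule ℝ E}
    (hp : IsClosed (p : Set E)) (hf : ContinuousOn f (closure Ω))
    (h : ∀ φ : 𝓓(Ω, ℝ), ∫ x, φ x • f x ∂μ ∈ p) : MapsTo f (closure Ω) p := by
  have hfΩ : ContinuousOn f Ω := hf.mono subset_closure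
  have hopen : IsOpen ((Ω : Set X) ∩ f ⁻¹' (p : Set E)ᶜ) :=
    hfΩ.isOpen_inter_preimage Ω.isOpen hp.isOpen_compl
  have hae : ∀ᵐ x ∂μ, x ∈ Ω → f x ∈ p :=
    ae_mem_of_forall_integral_smul_mem hp (hfΩ.locallyIntegrableOn Ω.isOpen.measurableSet) h
  have hnull : μ ((Ω : Set X) ∩ f ⁻¹' (p : Set E)ᶜ) = 0 := by
    refine measure_mono_null ?_ (ae_iff.1 hae)
    exact fun x hx hmem ↦ hx.2 (hmem hx.1)
  have hΩ : MapsTo f Ω p := fun x hx ↦ by_contra fun hxp ↦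
    (hopen.eq_empty_of_measure_zero hnull).subset ⟨hx, hxp⟩
  simpa only [hp.closure_eq] using hΩ.closure_of_continuousOn hf

theorem span_image_closure_le_topologicalClosure_range_integralSMulCLM [CompleteSpace E]
    (hf : ContinuousOn f (closure Ω)) :
    Submodule.span ℝ (f '' closure Ω) ≤ (integralSMulCLM Ω f μ).range.topologicalClosure := by
  have hloc : LocallyIntegrableOn f Ω μ :=
    (hf.mono subset_closure).locallyIntegrableOn Ω.isOpen.measurableSet
  rw [Submodule.span_le, image_subset_iff]
  refine mapsTo_closure_of_forall_integral_smul_mem (μ := μ)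
    (Submodule.isClosed_topologicalClosure _) hf fun φ ↦ Submodule.le_topologicalClosure _ ?_
  exact ⟨φ, integralSMulCLM_apply hloc φ⟩

theorem span_image_closure_le_range_integralSMulCLM [FiniteDimensional ℝ E]
    (hf : ContinuousOn f (closure Ω)) :
    Submodule.span ℝ (f '' closure Ω) ≤ (integralSMulCLM Ω f μ).range := by
  have : CompleteSpace E := FiniteDimensional.complete ℝ E
  exact (span_image_closure_le_topologicalClosure_range_integralSMulCLM hf).trans_eq
    (Submodule.closed_of_finiteDimensional _).submodule_topologicalClosure_eq

end TestFunctions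

theorem statement0_general {E : Type*} [NormedAddCommGroup E] [NormedSpace ℝ E]
    [FiniteDimensional ℝ E] {a b : ℝ} (hab : a ≠ b) {f : ℝ → E} (hf : ContinuousOn f (Icc a b))
    {α : E} (hα : α ∈ Submodule.span ℝ (f '' Icc a b)) :
    ∃ x : ℝ → ℝ, ContDiff ℝ ∞ x ∧ tsupport x ⊆ Ioo a b ∧ ∫ s in a..b, x s • f s = α := by
  let Ω : Opens ℝ := ⟨Ioo a b, isOpen_Ioo⟩
  rw [← closure_Ioo hab] at hf hα
  have hloc : LocallyIntegrableOn f Ω volume :=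
    (hf.mono subset_closure).locallyIntegrableOn measurableSet_Ioo
  obtain ⟨φ, hφ⟩ := span_image_closure_le_range_integralSMulCLM (Ω := Ω) (μ := volume) hf hα
  refine ⟨φ, φ.contDiff, φ.tsupport_subset, ?_⟩
  have hsupp : Function.support (fun s ↦ φ s • f s) ⊆ Ioc a b :=
    (Function.support_smul_subset_left _ _).trans <|
      (subset_tsupport φ).trans <| φ.tsupport_subset.trans Ioo_subset_Ioc_self
  calc ∫ s in a..b, φ s • f s
    _ = ∫ s, φ s • f s := intervalIntegral.integral_eq_integral_of_support_subset hsupp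
    _ = integralSMulCLM Ω f volume φ := (integralSMulCLM_apply hloc φ).symm
    _ = α := hφ

/-- Claim in the proof of Lemma 3.4, the case `k = 0`.
If `f : [0,1] → ℝⁿ` (`n ≥ 1`) is continuous and ℝ-full (the real linear span of its image
is all of `ℝⁿ`), then for any `α ∈ ℝⁿ` and any `ε > 0` there is a continuous function
`x : [0,1] → ℝ` with `x 0 = x 1 = 0` and `‖∫₀¹ x(s) • f(s) ds - α‖ < ε`. -/
theorem statement0 (n : ℕ) (hn : 1 ≤ n)
    (f : ℝ → EuclideanSpace ℝ (Fin n))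
    (hf : ContinuousOn f (Icc 0 1))
    (hfull : Submodule.span ℝ (f '' Icc 0 1) = ⊤)
    (α : EuclideanSpace ℝ (Fin n)) (ε : ℝ) (hε : 0 < ε) :
    ∃ x : ℝ → ℝ, ContinuousOn x (Icc 0 1) ∧ x 0 = 0 ∧ x 1 = 0 ∧
      ‖(∫ s in (0:ℝ)..1, x s • f s) - α‖ < ε := by
  obtain ⟨x, hx, hsupp, hα⟩ :=
    statement0_general (α := α) zero_ne_one hf (hfull ▸ Submodule.mem_top)
  exact ⟨x, hx.continuous.continuousOn, image_eq_zero_of_notMem_tsupport fun h ↦ (hsupp h).1.false,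
    image_eq_zero_of_notMem_tsupport fun h ↦ (hsupp h).2.false, by simpa [hα] using hε⟩
end

section
/- Let n ≥ 1 be an integer, let f : [0,1] → ℝⁿ be a continuous map that is ℝ-full, and let α ∈ ℝⁿ. Then there exist points 0 < s₁ < s₂ < ⋯ < sₙ < 1, a number σ > 0 such that the closed intervals [sⱼ − σ, sⱼ + σ] (j = 1, …, n) are pairwise disjoint and contained in (0,1), and real numbers λ₁, …, λₙ, such that the step function x₀ : [0,1] → ℝ defined by x₀(s) = λⱼ for s ∈ [sⱼ − σ, sⱼ + σ] and x₀(s) = 0 otherwise satisfies ∫₀¹ x₀(s)·f(s) ds = α exactly. -/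
open MeasureTheory Set

/-!
A linearly independent family stays independent under small perturbations. Since `f` is continuous
and full, there are `n` interior points `sⱼ` at which the values `f (sⱼ)` form a basis. The averages
of `f` over `[sⱼ - σ, sⱼ + σ]` tend to `f (sⱼ)` as `σ → 0`, so for small `σ` the integrals over
these intervals are again a basis, and the `λⱼ` are the coordinates of `α` in it.
-/

open Filter Metric Module Topology

lemma span_image_closure {𝕜 X E : Type*} [NontriviallyNormedField 𝕜] [CompleteSpace 𝕜]
    [TopologicalSpace X] [AddCommGroup E] [TopologicalSpace E] [IsTopologicalAddGroup E] [T2Space E]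
    [Module 𝕜 E] [ContinuousSMul 𝕜 E] [FiniteDimensional 𝕜 E] {f : X → E} {S : Set X}
    (hf : ContinuousOn f (closure S)) :
    Submodule.span 𝕜 (f '' closure S) = Submodule.span 𝕜 (f '' S) := by
  refine le_antisymm (Submodule.span_le.2 ?_) (Submodule.span_mono (image_mono subset_closure))
  exact hf.image_closure.trans
    (closure_minimal Submodule.subset_span (Submodule.closed_of_finiteDimensional _))

lemma exists_strictMono_linearIndependent {K V X : Type*} [DivisionRing K] [AddCommGroup V]
    [Module K V] [FiniteDimensional K V] [LinearOrder X] {f : X → V} {S : Set X}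
    (hS : Submodule.span K (f '' S) = ⊤) :
    ∃ s : Fin (finrank K V) → X, StrictMono s ∧ (∀ j, s j ∈ S) ∧
      LinearIndependent K (f ∘ s) := by
  obtain ⟨T, hTS, -, hspan, hT⟩ :=
    exists_linearIndepOn_extension (linearIndepOn_empty K f) (empty_subset S)
  have hT_span : ⊤ ≤ Submodule.span K (range fun t : T => f t) := by
    rw [← image_eq_range, ← hS]
    exact Submodule.span_le.2 hspan
  have : Fintype T := @Fintype.ofFinite _ hT.linearIndependent.finite
  have hcard : T.toFinset.card = finrank K V := by
    rw [toFinset_card, finrank_eq_card_basis (Basis.mk hT.linearIndependent hT_span)]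
  let e := T.toFinset.orderEmbOfFin hcard
  have he : ∀ j, e j ∈ T := fun j => mem_toFinset.1 (T.toFinset.orderEmbOfFin_mem hcard j)
  exact ⟨e, e.strictMono, fun j => hTS (he j),
    hT.linearIndependent.comp (fun j => ⟨e j, he j⟩)
      fun _ _ h => e.injective (Subtype.mk.inj h)⟩

lemma eventually_pairwise_disjoint_closedBall {ι X : Type*} [Finite ι] [MetricSpace X]
    {s : ι → X} (hs : Function.Injective s) :
    ∀ᶠ r in 𝓝 (0 : ℝ), Pairwise fun i j => Disjoint (closedBall (s i) r) (closedBall (s j) r) := by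
  have hpair : ∀ i j, ∀ᶠ r in 𝓝 (0 : ℝ),
      i ≠ j → Disjoint (closedBall (s i) r) (closedBall (s j) r) := fun i j => by
    rw [eventually_imp_distrib_left]
    intro hij
    have hlim : Tendsto (fun r : ℝ => r + r) (𝓝 0) (𝓝 0) :=
      (continuous_id.add continuous_id).tendsto' 0 0 (add_zero 0)
    filter_upwards [hlim.eventually_lt_const (dist_pos.2 (hs.ne hij))] with r hr
    exact closedBall_disjoint_closedBall hr
  filter_upwards [eventually_all.2 fun i => eventually_all.2 (hpair i)] with r hr i j
  exact hr i j

section ShrinkingSets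

variable {ι X E : Type*} [TopologicalSpace X] [MeasurableSpace X] [OpensMeasurableSpace X]
  [NormedAddCommGroup E] [NormedSpace ℝ E] [CompleteSpace E] {μ : Measure X}
  [IsLocallyFiniteMeasure μ] {f : X → E} {l : Filter ι}

lemma tendsto_setAverage_of_continuousAt {x : X} {K : ι → Set X} (hf : ContinuousAt f x)
    (hfm : StronglyMeasurableAtFilter f (𝓝 x) μ) (hK : Tendsto K l (𝓝 x).smallSets)
    (hμ : ∀ᶠ i in l, μ.real (K i) ≠ 0) :
    Tendsto (fun i => ⨍ t in K i, f t ∂μ) l (𝓝 (f x)) := by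
  rw [← tendsto_sub_nhds_zero_iff]
  refine (hf.integral_sub_linear_isLittleO_ae hfm hK).tendsto_inv_smul_nhds_zero.congr' ?_
  filter_upwards [hμ] with i hi
  rw [setAverage_eq, smul_sub, inv_smul_smul₀ hi]

lemma eventually_linearIndependent_setIntegral {κ : Type*} [Finite κ] {s : κ → X}
    {K : κ → ι → Set X} (hf : ∀ j, ContinuousAt f (s j))
    (hfm : ∀ j, StronglyMeasurableAtFilter f (𝓝 (s j)) μ)
    (hK : ∀ j, Tendsto (K j) l (𝓝 (s j)).smallSets) (hμ : ∀ j, ∀ᶠ i in l, μ.real (K j i) ≠ 0)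
    (hs : LinearIndependent ℝ (f ∘ s)) :
    ∀ᶠ i in l, LinearIndependent ℝ fun j => ∫ t in K j i, f t ∂μ := by
  have havg : Tendsto (fun i j => ⨍ t in K j i, f t ∂μ) l (𝓝 (f ∘ s)) :=
    tendsto_pi_nhds.2 fun j => tendsto_setAverage_of_continuousAt (hf j) (hfm j) (hK j) (hμ j)
  filter_upwards [havg.eventually hs.eventually, eventually_all.2 hμ] with i hi hμi
  convert! hi.units_smul fun j => Units.mk0 _ (hμi j) with j
  rw [Pi.smul_apply', Units.smul_mk0, setAverage_eq, smul_inv_smul₀ (hμi j)]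

end ShrinkingSets

lemma measureReal_closedBall_ne_zero {X : Type*} [PseudoMetricSpace X] [ProperSpace X]
    [MeasurableSpace X] (μ : Measure X) [IsLocallyFiniteMeasure μ] [μ.IsOpenPosMeasure] (x : X)
    {r : ℝ} (hr : 0 < r) : μ.real (closedBall x r) ≠ 0 :=
  (measureReal_ne_zero_iff measure_closedBall_lt_top.ne).2 (measure_closedBall_pos μ x hr).ne'

section StepFunction

variable {ι X M E : Type*} [Fintype ι] [NormedAddCommGroup E] [NormedSpace ℝ E]

/-- The step function with value `c i` on the set `K i` and `0` outside `⋃ i, K i`; where several of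
the sets overlap, their values add up. -/
noncomputable def stepFunction [AddCommMonoid M] (K : ι → Set X) (c : ι → M) (t : X) : M :=
  ∑ i, (K i).indicator (fun _ => c i) t

lemma stepFunction_of_mem [AddCommMonoid M] {K : ι → Set X} (c : ι → M)
    (hK : Pairwise fun i j => Disjoint (K i) (K j)) {i : ι} {t : X} (ht : t ∈ K i) :
    stepFunction K c t = c i := by
  rw [stepFunction, Fintype.sum_eq_single i fun j hji =>
    indicator_of_notMem (disjoint_right.1 (hK hji) ht) _, indicator_of_mem ht]

lemma stepFunction_of_notMem [AddCommMonoid M] {K : ι → Set X} (c : ι → M) {t : X}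
    (ht : t ∉ ⋃ i, K i) : stepFunction K c t = 0 :=
  Finset.sum_eq_zero fun i _ => indicator_of_notMem (fun hi => ht (mem_iUnion_of_mem i hi)) _

lemma setIntegral_stepFunction_smul [MeasurableSpace X] {μ : Measure X} {f : X → E}
    {K : ι → Set X} {S : Set X} (c : ι → ℝ) (hK : ∀ i, MeasurableSet (K i)) (hKS : ∀ i, K i ⊆ S)
    (hf : ∀ i, IntegrableOn f (K i) μ) :
    ∫ t in S, stepFunction K c t • f t ∂μ = ∑ i, c i • ∫ t in K i, f t ∂μ := by
  have hterm : ∀ t, stepFunction K c t • f t = ∑ i, (K i).indicator (fun u => c i • f u) t :=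
    fun t => by simp only [stepFunction, Finset.sum_smul, indicator_smul_apply_left]
  have hint : ∀ i, Integrable ((K i).indicator fun u => c i • f u) (μ.restrict S) := fun i =>
    ((integrable_indicator_iff (hK i)).2 ((hf i).smul (c i))).integrableOn
  simp_rw [hterm]
  rw [integral_finsetSum _ fun i _ => hint i]
  refine Finset.sum_congr rfl fun i _ => ?_
  rw [setIntegral_indicator (hK i), inter_eq_self_of_subset_right (hKS i), integral_smul]

lemma exists_setIntegral_stepFunction_smul_eq [FiniteDimensional ℝ E] [MeasurableSpace X]
    {μ : Measure X} {f : X → E} {K : ι → Set X} {S : Set X} (hK : ∀ i, MeasurableSet (K i))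
    (hKS : ∀ i, K i ⊆ S) (hf : ∀ i, IntegrableOn f (K i) μ)
    (hindep : LinearIndependent ℝ fun i => ∫ t in K i, f t ∂μ)
    (hcard : Fintype.card ι = finrank ℝ E) (α : E) :
    ∃ c : ι → ℝ, ∫ t in S, stepFunction K c t • f t ∂μ = α := by
  have hα : α ∈ Submodule.span ℝ (range fun i => ∫ t in K i, f t ∂μ) :=
    (hindep.span_eq_top_of_card_eq_finrank' hcard).ge Submodule.mem_top
  obtain ⟨c, hc⟩ := (Submodule.mem_span_range_iff_exists_fun ℝ).1 hα
  exact ⟨c, (setIntegral_stepFunction_smul c hK hKS hf).trans hc⟩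

end StepFunction

theorem statement2_general {E : Type*} [NormedAddCommGroup E] [NormedSpace ℝ E]
    [FiniteDimensional ℝ E] {n : ℕ} (hn : finrank ℝ E = n) (μ : Measure ℝ)
    [IsLocallyFiniteMeasure μ] [μ.IsOpenPosMeasure] {a b : ℝ} (hab : a < b) {f : ℝ → E}
    (hf : ContinuousOn f (Icc a b)) (hfull : Submodule.span ℝ (f '' Icc a b) = ⊤) :
    ∃ (s : Fin n → ℝ) (σ : ℝ), StrictMono s ∧ 0 < σ ∧
      (∀ j, Icc (s j - σ) (s j + σ) ⊆ Ioo a b) ∧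
      (Pairwise fun i j => Disjoint (Icc (s i - σ) (s i + σ)) (Icc (s j - σ) (s j + σ))) ∧
      ∀ α : E, ∃ (lam : Fin n → ℝ) (x₀ : ℝ → ℝ),
        (∀ j, ∀ t ∈ Icc (s j - σ) (s j + σ), x₀ t = lam j) ∧
        (∀ t, t ∉ ⋃ j, Icc (s j - σ) (s j + σ) → x₀ t = 0) ∧
        (∫ t in a..b, x₀ t • f t ∂μ) = α := by
  subst hn
  simp only [← Real.closedBall_eq_Icc]
  have hfull' : Submodule.span ℝ (f '' Ioo a b) = ⊤ := by
    rw [← closure_Ioo hab.ne] at hf hfull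
    rw [← span_image_closure hf, hfull]
  obtain ⟨s, hs, hsI, hindep⟩ := exists_strictMono_linearIndependent hfull'
  have hnhds : ∀ j, Ioo a b ∈ 𝓝 (s j) := fun j => isOpen_Ioo.mem_nhds (hsI j)
  have hfI : ContinuousOn f (Ioo a b) := hf.mono Ioo_subset_Icc_self
  have hsub : ∀ᶠ σ in 𝓝[>] (0 : ℝ), ∀ j, closedBall (s j) σ ⊆ Ioo a b :=
    eventually_all.2 fun j =>
      (eventually_closedBall_subset (hnhds j)).filter_mono nhdsWithin_le_nhds
  have hbasis : ∀ᶠ σ in 𝓝[>] (0 : ℝ),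
      LinearIndependent ℝ fun j => ∫ t in closedBall (s j) σ, f t ∂μ :=
    eventually_linearIndependent_setIntegral (fun j => hfI.continuousAt (hnhds j))
      (fun j => ⟨_, hnhds j, hfI.aestronglyMeasurable measurableSet_Ioo⟩)
      (fun j => (tendsto_closedBall_smallSets (s j)).mono_left nhdsWithin_le_nhds)
      (fun j => eventually_mem_nhdsWithin.mono fun _ => measureReal_closedBall_ne_zero μ (s j))
      hindep
  obtain ⟨σ, hσ, hσI, hindepσ, hdisj⟩ := (eventually_mem_nhdsWithin.and <| hsub.and <| hbasis.and <|
    (eventually_pairwise_disjoint_closedBall hs.injective).filter_mono nhdsWithin_le_nhds).exists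
  refine ⟨s, σ, hs, hσ, hσI, hdisj, fun α => ?_⟩
  obtain ⟨c, hc⟩ := exists_setIntegral_stepFunction_smul_eq (fun j => measurableSet_closedBall)
    (fun j => (hσI j).trans Ioo_subset_Ioc_self)
    (fun j => (hfI.mono (hσI j)).integrableOn_compact (isCompact_closedBall _ _))
    hindepσ (Fintype.card_fin _) α
  exact ⟨c, _, fun j t => stepFunction_of_mem c hdisj, fun t => stepFunction_of_notMem c,
    (intervalIntegral.integral_of_le hab.le).trans hc⟩

/-- For a continuous ℝ-full map `f : [0,1] → ℝⁿ` and `α ∈ ℝⁿ` there are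
points `0 < s₁ < ⋯ < sₙ < 1`, a number `σ > 0` with the intervals `[sⱼ-σ, sⱼ+σ]` pairwise
disjoint and contained in `(0,1)`, and reals `λ₁, …, λₙ` such that the associated step
function `x₀` (equal to `λⱼ` on `[sⱼ-σ, sⱼ+σ]` and `0` elsewhere) satisfies
`∫₀¹ x₀(s) • f(s) ds = α` exactly. -/
theorem statement2 (n : ℕ) (hn : 1 ≤ n)
    (f : ℝ → EuclideanSpace ℝ (Fin n))
    (hf : ContinuousOn f (Icc 0 1))
    (hfull : Submodule.span ℝ (f '' Icc 0 1) = ⊤)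
    (α : EuclideanSpace ℝ (Fin n)) :
    ∃ (s : Fin n → ℝ) (σ : ℝ) (lam : Fin n → ℝ) (x₀ : ℝ → ℝ),
      StrictMono s ∧ 0 < σ ∧
      (∀ j, Icc (s j - σ) (s j + σ) ⊆ Ioo (0:ℝ) 1) ∧
      (Pairwise fun i j => Disjoint (Icc (s i - σ) (s i + σ)) (Icc (s j - σ) (s j + σ))) ∧
      (∀ j, ∀ t ∈ Icc (s j - σ) (s j + σ), x₀ t = lam j) ∧
      (∀ t, t ∉ ⋃ j, Icc (s j - σ) (s j + σ) → x₀ t = 0) ∧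
      (∫ t in (0:ℝ)..1, x₀ t • f t) = α := by
  obtain ⟨s, σ, hs, hσ, hI, hdisj, hα⟩ :=
    statement2_general finrank_euclideanSpace_fin volume zero_lt_one hf hfull
  obtain ⟨lam, x₀, hx₀⟩ := hα α
  exact ⟨s, σ, lam, x₀, hs, hσ, hI, hdisj, hx₀⟩
end

section
/- Let k and n be positive integers, set P = [0,1]ᵏ, and let f : P × [0,1] → ℝⁿ and α : P → ℝⁿ be continuous maps. Assume that for every p ∈ P the path f_p := f(p, ·) : [0,1] → ℝⁿ is ℝ-full, i.e. the ℝ-linear span of f_p([0,1]) equals ℝⁿ. Then for every ε > 0 there exists a continuous function x : P × [0,1] → ℝ such that x(p, 0) = x(p, 1) = 0 for all p ∈ P, and ‖∫₀¹ x(p,s)·f(p,s) ds − α(p)‖ < ε for all p ∈ P. -/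
open MeasureTheory Set

/-!
For a path `g`, the operator `v ↦ ∫ ⟪g s, v⟫ g s ds` is the frame operator of the family
`(g s)`. Its quadratic form is `∫ ‖⟪g s, v⟫‖² ds`, so for continuous `g` its kernel is orthogonal to
every `g s`; if the values of `g` span the finite-dimensional space, the operator is invertible.
The operator and hence its inverse depend continuously on a parameter `p`, so
`v p = (frame operator of g p)⁻¹ (α p)` is continuous and `x p s = ⟪g p s, v p⟫` solves
`∫ x p s • g p s ds = α p` exactly. To make the coefficient vanish at the endpoints, apply this
to `g p s = w s • f p s`, where `w` vanishes only there: the values `w s • f p s` still span, and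
`x p s * w s` is a coefficient for `f`.
-/

open InnerProductSpace (rankOne)
open scoped InnerProductSpace

section Span

variable {𝕜 S E : Type*} [NontriviallyNormedField 𝕜] [CompleteSpace 𝕜] [TopologicalSpace S]
  [AddCommGroup E] [TopologicalSpace E] [IsTopologicalAddGroup E] [T2Space E] [Module 𝕜 E]
  [ContinuousSMul 𝕜 E] [FiniteDimensional 𝕜 E] {f : S → E} {D K : Set S}

theorem span_image_eq_top_of_subset_closure (hf : ContinuousOn f K) (hDK : D ⊆ K)
    (hKD : K ⊆ closure D) (hfull : Submodule.span 𝕜 (f '' K) = ⊤) :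
    Submodule.span 𝕜 (f '' D) = ⊤ := by
  have hclosed : IsClosed (Submodule.span 𝕜 (f '' D) : Set E) :=
    Submodule.closed_of_finiteDimensional _
  rw [eq_top_iff, ← hfull, Submodule.span_le]
  rintro _ ⟨s, hs, rfl⟩
  have hmem : f s ∈ closure (f '' D) := ((hf s hs).mono hDK).mem_closure_image (hKD hs)
  exact closure_minimal Submodule.subset_span hclosed hmem

theorem span_image_smul_eq_top {w : S → 𝕜} (hf : ContinuousOn f K)
    (hw : K ⊆ closure {s ∈ K | w s ≠ 0}) (hfull : Submodule.span 𝕜 (f '' K) = ⊤) :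
    Submodule.span 𝕜 ((fun s ↦ w s • f s) '' K) = ⊤ := by
  rw [eq_top_iff, ← span_image_eq_top_of_subset_closure hf (sep_subset _ _) hw hfull,
    Submodule.span_le]
  rintro _ ⟨s, ⟨hs, hws⟩, rfl⟩
  rw [← inv_smul_smul₀ hws (f s)]
  exact Submodule.smul_mem _ _ (Submodule.subset_span (mem_image_of_mem _ hs))

end Span

theorem continuousOn_setIntegral_of_isCompact {X S F : Type*} [TopologicalSpace X]
    [TopologicalSpace S] [T2Space S] [MeasurableSpace S] [OpensMeasurableSpace S]
    {μ : Measure S} [IsFiniteMeasureOnCompacts μ] [NormedAddCommGroup F] [NormedSpace ℝ F]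
    {f : X → S → F} {P : Set X} {K : Set S} (hK : IsCompact K)
    (hf : ContinuousOn f.uncurry (P ×ˢ K)) :
    ContinuousOn (fun p ↦ ∫ s in K, f p s ∂μ) P := by
  have : CompactSpace K := isCompact_iff_compactSpace.1 hK
  have : IsFiniteMeasureOnCompacts (μ.comap ((↑) : K → S)) :=
    .comap' μ continuous_subtype_val (.subtype_coe hK.measurableSet)
  simp only [← integral_subtype_comap hK.measurableSet]
  refine continuousOn_integral_of_compact_support isCompact_univ ?_
    fun _ s _ hs ↦ (hs (mem_univ s)).elim
  exact hf.comp (f := fun q : X × K ↦ (q.1, (q.2 : S))) (by fun_prop) fun q hq ↦ ⟨hq.1, q.2.2⟩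

section RankOne

variable {𝕜 S E F : Type*} [RCLike 𝕜] [TopologicalSpace S] [NormedAddCommGroup E]
  [InnerProductSpace 𝕜 E] [NormedAddCommGroup F] [NormedSpace 𝕜 F] {f : S → F} {g : S → E}
  {K : Set S}

theorem continuousOn_rankOne (hf : ContinuousOn f K) (hg : ContinuousOn g K) :
    ContinuousOn (fun s ↦ rankOne 𝕜 (f s) (g s)) K := by
  change ContinuousOn (fun s ↦ ContinuousLinearMap.smulRightL 𝕜 E F (innerSL 𝕜 (g s)) (f s)) K
  fun_prop

theorem integrableOn_rankOne [T2Space S] [MeasurableSpace S] [OpensMeasurableSpace S]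
    {μ : Measure S} [IsFiniteMeasureOnCompacts μ] (hK : IsCompact K) (hf : ContinuousOn f K)
    (hg : ContinuousOn g K) : IntegrableOn (fun s ↦ rankOne 𝕜 (f s) (g s)) K μ :=
  (continuousOn_rankOne hf hg).integrableOn_compact hK

theorem re_inner_rankOne_self_apply (u v : E) :
    RCLike.re ⟪v, rankOne 𝕜 u u v⟫_𝕜 = ‖⟪u, v⟫_𝕜‖ ^ 2 := by
  rw [InnerProductSpace.inner_right_rankOne_apply, inner_mul_symm_re_eq_norm, norm_mul,
    norm_inner_symm, sq]

end RankOne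

section FrameOperator

variable {𝕜 S E : Type*} [RCLike 𝕜] [MeasurableSpace S] {μ : Measure S}
  [NormedAddCommGroup E] [InnerProductSpace 𝕜 E] [NormedSpace ℝ E] {f : S → E}

variable (𝕜) in
/-- The frame operator `v ↦ ∫ ⟪f s, v⟫ • f s ∂μ` of a family of vectors `f` indexed by a measure
space, written as an integral of rank-one operators so that it is a continuous linear map by
construction (and `0` when that integral diverges). -/
noncomputable def frameOperator (μ : Measure S) (f : S → E) : E →L[𝕜] E :=
  ∫ s, rankOne 𝕜 (f s) (f s) ∂μ

theorem frameOperator_apply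
    (hf : Integrable (fun s ↦ rankOne 𝕜 (f s) (f s)) μ) (v : E) :
    frameOperator 𝕜 μ f v = ∫ s, ⟪f s, v⟫_𝕜 • f s ∂μ :=
  ContinuousLinearMap.integral_apply hf v

theorem frameOperator_apply_eq_zero_iff [CompleteSpace E]
    (hf : Integrable (fun s ↦ rankOne 𝕜 (f s) (f s)) μ) {v : E} :
    frameOperator 𝕜 μ f v = 0 ↔ ∀ᵐ s ∂μ, ⟪f s, v⟫_𝕜 = 0 := by
  have hfv : Integrable (fun s ↦ ⟪f s, v⟫_𝕜 • f s) μ := hf.apply_continuousLinearMap v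
  rw [frameOperator_apply hf]
  refine ⟨fun h ↦ ?_, fun h ↦ integral_eq_zero_of_ae (h.mono fun s hs ↦ by simp [hs])⟩
  have hsq (s : S) : RCLike.re ⟪v, ⟪f s, v⟫_𝕜 • f s⟫_𝕜 = ‖⟪f s, v⟫_𝕜‖ ^ 2 := by
    rw [← InnerProductSpace.rankOne_apply, re_inner_rankOne_self_apply]
  have hint : ∫ s, ‖⟪f s, v⟫_𝕜‖ ^ 2 ∂μ = 0 := by
    simp only [← hsq]
    rw [integral_re (hfv.const_inner v), integral_inner hfv, h, inner_zero_right, map_zero]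
  have hsq_int : Integrable (fun s ↦ ‖⟪f s, v⟫_𝕜‖ ^ 2) μ := by
    simpa only [hsq] using (hfv.const_inner (𝕜 := 𝕜) v).re
  filter_upwards [(integral_eq_zero_iff_of_nonneg (fun _ ↦ sq_nonneg _) hsq_int).1 hint] with s hs
  exact norm_eq_zero.1 ((pow_eq_zero_iff two_ne_zero).1 hs)

variable [TopologicalSpace S] [T2Space S] [OpensMeasurableSpace S] [IsFiniteMeasureOnCompacts μ]
  {K : Set S}

theorem isUnit_frameOperator_restrict [FiniteDimensional 𝕜 E] [μ.IsOpenPosMeasure]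
    (hK : IsCompact K) (hKint : K ⊆ closure (interior K)) (hf : ContinuousOn f K)
    (hfull : Submodule.span 𝕜 (f '' K) = ⊤) : IsUnit (frameOperator 𝕜 (μ.restrict K) f) := by
  have : CompleteSpace E := FiniteDimensional.complete 𝕜 E
  rw [ContinuousLinearMap.isUnit_iff_isUnit_toLinearMap, LinearMap.isUnit_iff_ker_eq_bot,
    LinearMap.ker_eq_bot']
  intro v hv
  have hae : ∀ᵐ s ∂μ.restrict K, ⟪f s, v⟫_𝕜 = 0 :=
    (frameOperator_apply_eq_zero_iff (integrableOn_rankOne hK hf hf)).1 hv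
  have horth : EqOn (fun s ↦ ⟪f s, v⟫_𝕜) 0 K :=
    Measure.eqOn_of_ae_eq hae (hf.inner continuousOn_const) continuousOn_const hKint
  have hspan : Submodule.span 𝕜 (f '' K) ≤ (𝕜 ∙ v)ᗮ := by
    rw [Submodule.span_le, image_subset_iff]
    exact fun s hs ↦ Submodule.mem_orthogonal_singleton_iff_inner_left.2 (horth hs)
  rw [hfull] at hspan
  exact inner_self_eq_zero.1
    (Submodule.mem_orthogonal_singleton_iff_inner_left.1 (hspan (Submodule.mem_top (x := v))))

theorem continuousOn_frameOperator_restrict {X : Type*} [TopologicalSpace X] {P : Set X}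
    {f : X → S → E} (hK : IsCompact K) (hf : ContinuousOn f.uncurry (P ×ˢ K)) :
    ContinuousOn (fun p ↦ frameOperator 𝕜 (μ.restrict K) (f p)) P :=
  continuousOn_setIntegral_of_isCompact (f := fun p s ↦ rankOne 𝕜 (f p s) (f p s)) hK
    (continuousOn_rankOne hf hf)

end FrameOperator

section ExactSolution

variable {𝕜 X S E : Type*} [RCLike 𝕜] [TopologicalSpace X] [TopologicalSpace S] [T2Space S]
  [MeasurableSpace S] [OpensMeasurableSpace S] {μ : Measure S} [IsFiniteMeasureOnCompacts μ]
  [μ.IsOpenPosMeasure] [NormedAddCommGroup E] [InnerProductSpace 𝕜 E] [NormedSpace ℝ E]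
  [FiniteDimensional 𝕜 E] {P : Set X} {K : Set S} {f : X → S → E} {α : X → E}

theorem exists_continuousOn_setIntegral_smul_eq (hK : IsCompact K)
    (hKint : K ⊆ closure (interior K)) (hf : ContinuousOn f.uncurry (P ×ˢ K))
    (hα : ContinuousOn α P) (hfull : ∀ p ∈ P, Submodule.span 𝕜 (f p '' K) = ⊤) :
    ∃ x : X → S → 𝕜, ContinuousOn x.uncurry (P ×ˢ K) ∧
      ∀ p ∈ P, ∫ s in K, x p s • f p s ∂μ = α p := by
  have : CompleteSpace E := FiniteDimensional.complete 𝕜 E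
  have hfp (p) (hp : p ∈ P) : ContinuousOn (f p) K := hf.uncurry_left p hp
  let T p := frameOperator 𝕜 (μ.restrict K) (f p)
  have hT : ContinuousOn T P := continuousOn_frameOperator_restrict hK hf
  have hunit p (hp : p ∈ P) : IsUnit (T p) :=
    isUnit_frameOperator_restrict hK hKint (hfp p hp) (hfull p hp)
  have hTinv : ContinuousOn (fun p ↦ Ring.inverse (T p)) P := fun p hp ↦
    (NormedRing.inverse_continuousAt (hunit p hp).unit).comp_continuousWithinAt (f := T) (hT p hp)
  let v p := Ring.inverse (T p) (α p)
  have hv : ContinuousOn v P := hTinv.clm_apply hα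
  refine ⟨fun p s ↦ ⟪f p s, v p⟫_𝕜, hf.inner (hv.comp continuousOn_fst fun q hq ↦ hq.1),
    fun p hp ↦ ?_⟩
  calc ∫ s in K, ⟪f p s, v p⟫_𝕜 • f p s ∂μ
      = T p (v p) := (frameOperator_apply (integrableOn_rankOne hK (hfp p hp) (hfp p hp)) _).symm
    _ = (T p * Ring.inverse (T p)) (α p) := rfl
    _ = α p := by rw [Ring.mul_inverse_cancel _ (hunit p hp), one_apply_eq_self]

theorem exists_continuousOn_setIntegral_smul_eq_of_weight {w : S → 𝕜} (hK : IsCompact K)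
    (hKint : K ⊆ closure (interior K)) (hw : ContinuousOn w K)
    (hw_dense : K ⊆ closure {s ∈ K | w s ≠ 0}) (hf : ContinuousOn f.uncurry (P ×ˢ K))
    (hα : ContinuousOn α P) (hfull : ∀ p ∈ P, Submodule.span 𝕜 (f p '' K) = ⊤) :
    ∃ x : X → S → 𝕜, ContinuousOn x.uncurry (P ×ˢ K) ∧
      (∀ p s, w s = 0 → x p s = 0) ∧ ∀ p ∈ P, ∫ s in K, x p s • f p s ∂μ = α p := by
  have hw' : ContinuousOn (fun q : X × S ↦ w q.2) (P ×ˢ K) :=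
    hw.comp continuousOn_snd fun _ hq ↦ hq.2
  obtain ⟨y, hy, hy_int⟩ := exists_continuousOn_setIntegral_smul_eq (μ := μ)
    (f := fun p s ↦ w s • f p s) hK hKint (hw'.smul hf) hα
    fun p hp ↦ span_image_smul_eq_top (hf.uncurry_left p hp) hw_dense (hfull p hp)
  refine ⟨fun p s ↦ y p s * w s, hy.mul hw', fun p s hs ↦ mul_eq_zero_of_right _ hs, fun p hp ↦ ?_⟩
  simpa only [mul_smul] using hy_int p hp

end ExactSolution

theorem statement3_general {𝕜 X E : Type*} [RCLike 𝕜] [TopologicalSpace X]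
    [NormedAddCommGroup E] [InnerProductSpace 𝕜 E] [NormedSpace ℝ E] [FiniteDimensional 𝕜 E]
    {P : Set X} {a b : ℝ} (hab : a < b) {f : X → ℝ → E} {α : X → E}
    (hf : ContinuousOn f.uncurry (P ×ˢ Icc a b)) (hα : ContinuousOn α P)
    (hfull : ∀ p ∈ P, Submodule.span 𝕜 (f p '' Icc a b) = ⊤) :
    ∃ x : X → ℝ → 𝕜, ContinuousOn x.uncurry (P ×ˢ Icc a b) ∧
      (∀ p, x p a = 0 ∧ x p b = 0) ∧ ∀ p ∈ P, ∫ s in a..b, x p s • f p s = α p := by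
  let w (s : ℝ) : 𝕜 := ((s - a) * (b - s) : ℝ)
  have hw : Continuous w := by fun_prop
  have hIoo : Ioo a b ⊆ {s ∈ Icc a b | w s ≠ 0} := fun s hs ↦
    ⟨Ioo_subset_Icc_self hs,
      RCLike.ofReal_ne_zero.2 (mul_pos (sub_pos.2 hs.1) (sub_pos.2 hs.2)).ne'⟩
  have hw_dense : Icc a b ⊆ closure {s ∈ Icc a b | w s ≠ 0} :=
    (closure_Ioo hab.ne).ge.trans (closure_mono hIoo)
  have hIcc : Icc a b ⊆ closure (interior (Icc a b)) := by
    rw [interior_Icc, closure_Ioo hab.ne]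
  obtain ⟨x, hx, hx_zero, hx_int⟩ := exists_continuousOn_setIntegral_smul_eq_of_weight (μ := volume)
    isCompact_Icc hIcc hw.continuousOn hw_dense hf hα hfull
  refine ⟨x, hx, fun p ↦ ⟨hx_zero p a (by simp [w]), hx_zero p b (by simp [w])⟩, fun p hp ↦ ?_⟩
  rw [intervalIntegral.integral_of_le hab.le, ← integral_Icc_eq_integral_Ioc, hx_int p hp]

/-- Lemma 3.3, main part. Let `P = [0,1]ᵏ` and let
`f : P × [0,1] → ℝⁿ` and `α : P → ℝⁿ` be continuous, with each path `f_p = f(p,·)`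
ℝ-full. Then for every `ε > 0` there is a continuous `x : P × [0,1] → ℝ` with
`x(p,0) = x(p,1) = 0` and `‖∫₀¹ x(p,s) • f(p,s) ds - α(p)‖ < ε` for all `p ∈ P`. -/
theorem statement3 (k n : ℕ) (hk : 0 < k) (hn : 0 < n)
    (f : (Fin k → ℝ) → ℝ → EuclideanSpace ℝ (Fin n))
    (α : (Fin k → ℝ) → EuclideanSpace ℝ (Fin n))
    (hf : ContinuousOn (fun q : (Fin k → ℝ) × ℝ => f q.1 q.2)
      (Icc (0 : Fin k → ℝ) 1 ×ˢ Icc (0:ℝ) 1))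
    (hα : ContinuousOn α (Icc (0 : Fin k → ℝ) 1))
    (hfull : ∀ p ∈ Icc (0 : Fin k → ℝ) 1, Submodule.span ℝ (f p '' Icc (0:ℝ) 1) = ⊤)
    (ε : ℝ) (hε : 0 < ε) :
    ∃ x : (Fin k → ℝ) → ℝ → ℝ,
      ContinuousOn (fun q : (Fin k → ℝ) × ℝ => x q.1 q.2)
        (Icc (0 : Fin k → ℝ) 1 ×ˢ Icc (0:ℝ) 1) ∧
      (∀ p ∈ Icc (0 : Fin k → ℝ) 1, x p 0 = 0 ∧ x p 1 = 0) ∧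
      (∀ p ∈ Icc (0 : Fin k → ℝ) 1,
        ‖(∫ s in (0:ℝ)..1, x p s • f p s) - α p‖ < ε) := by
  obtain ⟨x, hx, hx_zero, hx_int⟩ := statement3_general zero_lt_one hf hα hfull
  exact ⟨x, hx, fun p _ ↦ hx_zero p, fun p hp ↦ by rwa [hx_int p hp, sub_self, norm_zero]⟩
end

section
/- Let k and n be positive integers, set P = [0,1]ᵏ and Q = [0,1]^{k−1} × {0} ⊂ P, and let f : P × [0,1] → ℝⁿ and α : P → ℝⁿ be continuous maps. Assume that for every p ∈ P the path f_p := f(p, ·) : [0,1] → ℝⁿ is ℝ-full, and assume in addition that α(p) = 0 for all p ∈ Q. Then for every ε > 0 there exists a continuous function x : P × [0,1] → ℝ such that x(p, 0) = x(p, 1) = 0 for all p ∈ P, x(p, s) = 0 for all p ∈ Q and all s ∈ [0,1], and ‖∫₀¹ x(p,s)·f(p,s) ds − α(p)‖ < ε for all p ∈ P. -/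
open MeasureTheory Set

/-!
Weight the path `f_p` by a function `w` that vanishes at the two endpoints and is positive in
between, and form the positive operator `G_p v = ∫ w(s) ⟪f_p(s), v⟫ f_p(s) ds`. Since
`⟪v, G_p v⟫ = ∫ w(s) ⟪f_p(s), v⟫² ds`, fullness of `f_p` makes `G_p` positive definite, hence
invertible. Then `x(p, s) = w(s) ⟪f_p(s), G_p⁻¹ α(p)⟫` is continuous, represents `α(p)` exactly, and
vanishes wherever `α` does.
-/

section WeightedFrame

open InnerProductSpace
open scoped Interval RealInnerProductSpace

theorem continuousOn_intervalIntegral_of_continuousOn_prod {X F : Type*} [TopologicalSpace X]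
    [NormedAddCommGroup F] [NormedSpace ℝ F] {h : X → ℝ → F} {P : Set X} {a b : ℝ}
    (hh : ContinuousOn (fun q : X × ℝ => h q.1 q.2) (P ×ˢ [[a, b]])) :
    ContinuousOn (fun p => ∫ s in a..b, h p s) P := by
  have integrable : ∀ p ∈ P, IntervalIntegrable (h p) volume a b := fun p hp =>
    (hh.uncurry_left p hp).intervalIntegrable
  intro p hp
  rw [ContinuousWithinAt, Metric.tendsto_nhds]
  intro ε hε
  have hC : 0 < ε / (|b - a| + 1) := by positivity
  obtain ⟨V, hV, hclose⟩ :=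
    isCompact_uIcc.mem_uniformity_of_prod hh hp (Metric.dist_mem_uniformity hC)
  filter_upwards [hV, self_mem_nhdsWithin] with q hqV hqP
  calc dist (∫ s in a..b, h q s) (∫ s in a..b, h p s)
      = ‖∫ s in a..b, h q s - h p s‖ := by
        rw [dist_eq_norm, intervalIntegral.integral_sub (integrable q hqP) (integrable p hp)]
    _ ≤ ε / (|b - a| + 1) * |b - a| :=
        intervalIntegral.norm_integral_le_of_norm_le_const fun s hs => by
          rw [← dist_eq_norm]
          exact (hclose q hqV s (uIoc_subset_uIcc hs)).le
    _ < ε / (|b - a| + 1) * (|b - a| + 1) := by gcongr; exact lt_add_one _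
    _ = ε := div_mul_cancel₀ _ (by positivity)

variable {E : Type*} [NormedAddCommGroup E] [InnerProductSpace ℝ E]

theorem exists_inner_ne_zero_of_span_eq_top {S : Set E} (hS : Submodule.span ℝ S = ⊤) {v : E}
    (hv : v ≠ 0) : ∃ u ∈ S, ⟪u, v⟫ ≠ 0 := by
  by_contra! orthogonal
  have : innerₛₗ ℝ v = 0 :=
    LinearMap.ext_on hS fun u hu => by simpa [real_inner_comm] using orthogonal u hu
  exact hv (inner_self_eq_zero.1 (LinearMap.congr_fun this v))

theorem exists_mem_Ioo_inner_ne_zero {g : ℝ → E} {a b : ℝ} (hab : a < b)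
    (hg : ContinuousOn g (Icc a b)) (hfull : Submodule.span ℝ (g '' Icc a b) = ⊤) {v : E}
    (hv : v ≠ 0) : ∃ s ∈ Ioo a b, ⟪g s, v⟫ ≠ 0 := by
  by_contra! orthogonal
  have orthogonal_Icc : EqOn (fun s => ⟪g s, v⟫) 0 (Icc a b) :=
    EqOn.of_subset_closure orthogonal (hg.inner continuousOn_const) continuousOn_const
      Ioo_subset_Icc_self (closure_Ioo hab.ne).ge
  obtain ⟨_, ⟨s, hs, rfl⟩, hne⟩ := exists_inner_ne_zero_of_span_eq_top hfull hv
  exact hne (orthogonal_Icc hs)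

/-- The frame operator `v ↦ ∫ w(s) ⟪g(s), v⟫ g(s) ds` of a path `g` on `[a, b]` with weight `w`,
encoded as an operator-valued integral of rank-one operators. -/
noncomputable def weightedFrameOperator (w : ℝ → ℝ) (g : ℝ → E) (a b : ℝ) : E →L[ℝ] E :=
  ∫ s in a..b, w s • rankOne ℝ (g s) (g s)

/-- The coefficient function `s ↦ w(s) ⟪g(s), G⁻¹ v⟫` of `v` along the path `g`, where `G` is the
weighted frame operator. It is `0` by convention when `G` is not invertible. -/
noncomputable def weightedFrameCoeff (w : ℝ → ℝ) (g : ℝ → E) (a b : ℝ) (v : E) (s : ℝ) : ℝ :=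
  w s * ⟪g s, Ring.inverse (weightedFrameOperator w g a b) v⟫

theorem continuousOn_smul_rankOne {Y : Type*} [TopologicalSpace Y] {w : Y → ℝ} {g : Y → E}
    {S : Set Y} (hw : ContinuousOn w S) (hg : ContinuousOn g S) :
    ContinuousOn (fun y => w y • rankOne ℝ (g y) (g y)) S :=
  hw.smul (((rankOne ℝ).continuous.comp_continuousOn hg).clm_apply hg)

section Apply

variable {w : ℝ → ℝ} {g : ℝ → E} {a b : ℝ}

theorem weightedFrameOperator_apply
    (hint : IntervalIntegrable (fun s => w s • rankOne ℝ (g s) (g s)) volume a b) (v : E) :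
    weightedFrameOperator w g a b v = ∫ s in a..b, (w s * ⟪g s, v⟫) • g s := by
  simp only [weightedFrameOperator, ContinuousLinearMap.intervalIntegral_apply hint,
    smul_apply, rankOne_apply, smul_smul]

theorem inner_weightedFrameOperator_self [CompleteSpace E]
    (hint : IntervalIntegrable (fun s => w s • rankOne ℝ (g s) (g s)) volume a b) (v : E) :
    ⟪v, weightedFrameOperator w g a b v⟫ = ∫ s in a..b, w s * ⟪g s, v⟫ ^ 2 := by
  have evaluate := ((innerSL ℝ v).comp
    (ContinuousLinearMap.apply ℝ E v)).intervalIntegral_comp_comm hint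
  refine evaluate.symm.trans (intervalIntegral.integral_congr fun s _ => ?_)
  simp only [ContinuousLinearMap.comp_apply, ContinuousLinearMap.apply_apply, innerSL_apply_apply,
    smul_apply, rankOne_apply, real_inner_smul_right, real_inner_comm (g s) v]
  ring

end Apply

section FullPath

variable {w : ℝ → ℝ} {g : ℝ → E} {a b : ℝ} (hab : a < b) (hw : ContinuousOn w (Icc a b))
  (hw_pos : ∀ s ∈ Ioo a b, 0 < w s) (hg : ContinuousOn g (Icc a b))
  (hfull : Submodule.span ℝ (g '' Icc a b) = ⊤)

include hab hw hw_pos hg hfull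

theorem inner_weightedFrameOperator_self_pos [CompleteSpace E] {v : E} (hv : v ≠ 0) :
    0 < ⟪v, weightedFrameOperator w g a b v⟫ := by
  rw [inner_weightedFrameOperator_self
    ((continuousOn_smul_rankOne hw hg).intervalIntegrable_of_Icc hab.le)]
  have hw_nonneg : ∀ s ∈ Icc a b, 0 ≤ w s := by
    rw [← closure_Ioo hab.ne] at hw ⊢
    exact fun s hs => le_on_closure (fun t ht => (hw_pos t ht).le) continuousOn_const hw hs
  obtain ⟨s, hs, hne⟩ := exists_mem_Ioo_inner_ne_zero hab hg hfull hv
  refine intervalIntegral.integral_pos hab ?_ ?_ ⟨s, Ioo_subset_Icc_self hs, ?_⟩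
  · exact hw.mul ((hg.inner continuousOn_const).pow 2)
  · exact fun t ht => mul_nonneg (hw_nonneg t (Ioc_subset_Icc_self ht)) (sq_nonneg _)
  · exact mul_pos (hw_pos s hs) (sq_pos_of_ne_zero hne)

variable [FiniteDimensional ℝ E]

theorem isUnit_weightedFrameOperator : IsUnit (weightedFrameOperator w g a b) := by
  have := FiniteDimensional.complete ℝ E
  have ker_trivial : ∀ v, weightedFrameOperator w g a b v = 0 → v = 0 := by
    intro v hv
    by_contra hne
    simpa [hv] using inner_weightedFrameOperator_self_pos hab hw hw_pos hg hfull hne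
  rw [ContinuousLinearMap.isUnit_iff_isUnit_toLinearMap, LinearMap.isUnit_iff_ker_eq_bot]
  exact LinearMap.ker_eq_bot'.2 ker_trivial

theorem integral_weightedFrameCoeff_smul (v : E) :
    ∫ s in a..b, weightedFrameCoeff w g a b v s • g s = v := by
  simp only [weightedFrameCoeff]
  rw [← weightedFrameOperator_apply
      ((continuousOn_smul_rankOne hw hg).intervalIntegrable_of_Icc hab.le),
    ← mul_apply_eq_comp,
    Ring.mul_inverse_cancel _ (isUnit_weightedFrameOperator hab hw hw_pos hg hfull),
    one_apply_eq_self]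

end FullPath

section ParametricFrame

variable {X : Type*} [TopologicalSpace X] {P : Set X} {a b : ℝ} {w : ℝ → ℝ} {f : X → ℝ → E}
  (hw : ContinuousOn w [[a, b]])
  (hf : ContinuousOn (fun q : X × ℝ => f q.1 q.2) (P ×ˢ [[a, b]]))

include hw hf

theorem continuousOn_weightedFrameOperator :
    ContinuousOn (fun p => weightedFrameOperator w (f p) a b) P :=
  continuousOn_intervalIntegral_of_continuousOn_prod
    (continuousOn_smul_rankOne (hw.comp continuousOn_snd fun _ hq => hq.2) hf)

theorem continuousOn_weightedFrameCoeff [CompleteSpace E]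
    (hunit : ∀ p ∈ P, IsUnit (weightedFrameOperator w (f p) a b)) {α : X → E}
    (hα : ContinuousOn α P) :
    ContinuousOn (fun q : X × ℝ => weightedFrameCoeff w (f q.1) a b (α q.1) q.2)
      (P ×ˢ [[a, b]]) := by
  have hinv : ContinuousOn (fun p => Ring.inverse (weightedFrameOperator w (f p) a b)) P := by
    intro p hp
    obtain ⟨u, hu⟩ := hunit p hp
    exact ContinuousAt.comp_continuousWithinAt (hu ▸ NormedRing.inverse_continuousAt u)
      (continuousOn_weightedFrameOperator hw hf p hp)
  exact (hw.comp continuousOn_snd fun _ hq => hq.2).mul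
    (hf.inner ((hinv.clm_apply hα).comp continuousOn_fst fun _ hq => hq.1))

end ParametricFrame

theorem statement4_general [FiniteDimensional ℝ E] {X : Type*} [TopologicalSpace X] {P : Set X}
    {a b : ℝ} (hab : a < b) {f : X → ℝ → E} {α : X → E}
    (hf : ContinuousOn (fun q : X × ℝ => f q.1 q.2) (P ×ˢ Icc a b)) (hα : ContinuousOn α P)
    (hfull : ∀ p ∈ P, Submodule.span ℝ (f p '' Icc a b) = ⊤) :
    ∃ x : X → ℝ → ℝ,
      ContinuousOn (fun q : X × ℝ => x q.1 q.2) (P ×ˢ Icc a b) ∧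
      (∀ p, x p a = 0 ∧ x p b = 0) ∧
      (∀ p, α p = 0 → ∀ s, x p s = 0) ∧
      ∀ p ∈ P, ∫ s in a..b, x p s • f p s = α p := by
  have := FiniteDimensional.complete ℝ E
  let w : ℝ → ℝ := fun s => (s - a) * (b - s)
  have hw : ContinuousOn w (Icc a b) := by fun_prop
  have hw_pos : ∀ s ∈ Ioo a b, 0 < w s := fun s hs =>
    mul_pos (sub_pos.2 hs.1) (sub_pos.2 hs.2)
  have hfp : ∀ p ∈ P, ContinuousOn (f p) (Icc a b) := fun p hp => hf.uncurry_left p hp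
  have hunit : ∀ p ∈ P, IsUnit (weightedFrameOperator w (f p) a b) := fun p hp =>
    isUnit_weightedFrameOperator hab hw hw_pos (hfp p hp) (hfull p hp)
  refine ⟨fun p => weightedFrameCoeff w (f p) a b (α p), ?_, ?_, ?_, ?_⟩
  · rw [← uIcc_of_le hab.le] at hw hf ⊢
    exact continuousOn_weightedFrameCoeff hw hf hunit hα
  · exact fun p => by simp [weightedFrameCoeff, w]
  · exact fun p hp s => by simp [weightedFrameCoeff, hp]
  · exact fun p hp =>
      integral_weightedFrameCoeff_smul hab hw hw_pos (hfp p hp) (hfull p hp) (α p)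

end WeightedFrame

/-- Lemma 3.3, addendum. Let `P = [0,1]ᵏ` and
`Q = [0,1]^{k-1} × {0} ⊂ P` (the points of `P` whose last coordinate vanishes), and let
`f : P × [0,1] → ℝⁿ` and `α : P → ℝⁿ` be continuous with each path `f_p` ℝ-full and
`α(p) = 0` for all `p ∈ Q`. Then for every `ε > 0` there is a continuous
`x : P × [0,1] → ℝ` with `x(p,0) = x(p,1) = 0` for all `p ∈ P`, with `x(p,s) = 0` for all
`p ∈ Q` and `s ∈ [0,1]`, and `‖∫₀¹ x(p,s) • f(p,s) ds - α(p)‖ < ε` for all `p ∈ P`. -/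
theorem statement4 (k n : ℕ) (hk : 0 < k) (hn : 0 < n)
    (f : (Fin k → ℝ) → ℝ → EuclideanSpace ℝ (Fin n))
    (α : (Fin k → ℝ) → EuclideanSpace ℝ (Fin n))
    (hf : ContinuousOn (fun q : (Fin k → ℝ) × ℝ => f q.1 q.2)
      (Icc (0 : Fin k → ℝ) 1 ×ˢ Icc (0:ℝ) 1))
    (hα : ContinuousOn α (Icc (0 : Fin k → ℝ) 1))
    (hfull : ∀ p ∈ Icc (0 : Fin k → ℝ) 1, Submodule.span ℝ (f p '' Icc (0:ℝ) 1) = ⊤)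
    (hαQ : ∀ p ∈ Icc (0 : Fin k → ℝ) 1, p ⟨k - 1, by omega⟩ = 0 → α p = 0)
    (ε : ℝ) (hε : 0 < ε) :
    ∃ x : (Fin k → ℝ) → ℝ → ℝ,
      ContinuousOn (fun q : (Fin k → ℝ) × ℝ => x q.1 q.2)
        (Icc (0 : Fin k → ℝ) 1 ×ˢ Icc (0:ℝ) 1) ∧
      (∀ p ∈ Icc (0 : Fin k → ℝ) 1, x p 0 = 0 ∧ x p 1 = 0) ∧
      (∀ p ∈ Icc (0 : Fin k → ℝ) 1, p ⟨k - 1, by omega⟩ = 0 →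
        ∀ s ∈ Icc (0:ℝ) 1, x p s = 0) ∧
      (∀ p ∈ Icc (0 : Fin k → ℝ) 1,
        ‖(∫ s in (0:ℝ)..1, x p s • f p s) - α p‖ < ε) := by
  obtain ⟨x, hx, hends, hzero, hint⟩ := statement4_general zero_lt_one hf hα hfull
  exact ⟨x, hx, fun p _ => hends p, fun p hp hpQ s _ => hzero p (hαQ p hp hpQ) s,
    fun p hp => by simpa [hint p hp] using hε⟩
end

section
/- Let n ≥ 1 be an integer, let T be a compact topological space, let X be a topological space, and let f : T × X → ℂⁿ be a continuous map such that for every t ∈ T the ℝ-linear span of the image f({t} × X) is all of ℂⁿ (regarded as a real vector space of real dimension 2n). Then there exists a finite subset Λ ⊆ X such that for every t ∈ T the ℝ-linear span of the finite set {f(t, x) : x ∈ Λ} is all of ℂⁿ. -/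
/-!
Being a spanning family is an open condition: a spanning family of a finite-dimensional space
contains a basis, and a determinant that is nonzero at this basis stays nonzero nearby. Hence, for
each finite `Λ ⊆ X`, the set `U Λ` of parameters `t` at which `Λ` suffices is open. By finite
dimensionality the sets `U Λ` cover `T`, and they increase with `Λ`, so compactness makes a single
one of them all of `T`.
-/

section SpanningFamilies

open Submodule

theorem exists_finset_span_image_eq_span_range {R M ι : Type*} [Semiring R] [AddCommMonoid M]
    [Module R M] {v : ι → M} (hv : (span R (Set.range v)).FG) :
    ∃ s : Finset ι, span R (v '' s) = span R (Set.range v) := by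
  classical
  obtain ⟨t, htv, ht⟩ := (fg_span_iff_fg_span_finset_subset _).mp hv
  rw [← Set.image_univ, Finset.subset_set_image_iff] at htv
  obtain ⟨s, -, rfl⟩ := htv
  exact ⟨s, by rw [ht, Finset.coe_image]⟩

variable {𝕜 E : Type*} [NontriviallyNormedField 𝕜] [CompleteSpace 𝕜]
  [AddCommGroup E] [TopologicalSpace E] [IsTopologicalAddGroup E] [T2Space E]
  [Module 𝕜 E] [ContinuousSMul 𝕜 E]

theorem continuous_basis_det {ι : Type*} [Fintype ι] [DecidableEq ι] (b : Module.Basis ι 𝕜 E) :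
    Continuous fun v : ι → E => b.det v := by
  have hcoord : Continuous b.equivFun := continuous_equivFun_basis b
  exact Continuous.matrix_det <| continuous_matrix fun i j =>
    (continuous_apply i).comp (hcoord.comp (continuous_apply j))

variable [FiniteDimensional 𝕜 E]

theorem isOpen_setOf_span_range_eq_top (ι : Type*) :
    IsOpen {v : ι → E | span 𝕜 (Set.range v) = ⊤} := by
  classical
  refine isOpen_iff_eventually.mpr fun v hv => ?_
  obtain ⟨κ, a, -, hspan, hli⟩ := exists_linearIndependent' 𝕜 v
  have : Finite κ := hli.finite
  have := Fintype.ofFinite κ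
  let b := Module.Basis.mk hli (hspan.trans hv).ge
  have hdet : b.det (v ∘ a) ≠ 0 := by
    rw [← Module.Basis.coe_mk hli (hspan.trans hv).ge, b.det_self]
    exact one_ne_zero
  have hcont : Continuous fun w : ι → E => b.det (w ∘ a) :=
    (continuous_basis_det b).comp (by fun_prop)
  filter_upwards [hcont.continuousAt.eventually_ne hdet] with w hw
  have hwa : span 𝕜 (Set.range (w ∘ a)) = ⊤ := (b.is_basis_iff_det.mpr hw.isUnit).2
  exact eq_top_mono (span_mono (Set.range_comp_subset_range a w)) hwa

theorem isOpen_setOf_span_image_eq_top {T X : Type*} [TopologicalSpace T] {f : X → T → E}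
    (hf : ∀ x, Continuous (f x)) (s : Set X) :
    IsOpen {t | span 𝕜 ((fun x => f x t) '' s) = ⊤} := by
  simp only [Set.image_eq_range]
  exact (isOpen_setOf_span_range_eq_top s).preimage (continuous_pi fun x : s => hf x)

theorem statement5_general {T X : Type*} [TopologicalSpace T] [CompactSpace T] {f : X → T → E}
    (hf : ∀ x, Continuous (f x)) (hfull : ∀ t, span 𝕜 (Set.range fun x => f x t) = ⊤) :
    ∃ Λ : Finset X, ∀ t, span 𝕜 ((fun x => f x t) '' ↑Λ) = ⊤ := by
  let U (Λ : Finset X) : Set T := {t | span 𝕜 ((fun x => f x t) '' ↑Λ) = ⊤}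
  have hopen (Λ : Finset X) : IsOpen (U Λ) := isOpen_setOf_span_image_eq_top hf Λ
  have hcover : Set.univ ⊆ ⋃ Λ, U Λ := fun t _ => by
    obtain ⟨Λ, hΛ⟩ := exists_finset_span_image_eq_span_range
      (IsNoetherian.noetherian (span 𝕜 (Set.range fun x => f x t)))
    exact Set.mem_iUnion_of_mem Λ (hΛ.trans (hfull t))
  have hmono : Monotone U := fun Λ Λ' hΛ t ht =>
    eq_top_mono (span_mono (Set.image_mono (Finset.coe_subset.mpr hΛ))) ht
  obtain ⟨Λ, hΛ⟩ := isCompact_univ.elim_directed_cover U hopen hcover hmono.directed_le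
  exact ⟨Λ, fun t => hΛ (Set.mem_univ t)⟩

end SpanningFamilies

/-- compactness argument in the proof of Lemma 2.2. Let `T` be a compact
topological space, `X` a topological space, and `f : T × X → ℂⁿ` (`n ≥ 1`) a continuous map
such that for every `t ∈ T` the real linear span of `f({t} × X)` is all of `ℂⁿ` (viewed as a
real vector space). Then there is a finite set `Λ ⊆ X` such that for every `t ∈ T` the real
linear span of `{f(t,x) : x ∈ Λ}` is all of `ℂⁿ`. -/
theorem statement5 (n : ℕ) (hn : 1 ≤ n)
    (T X : Type*) [TopologicalSpace T] [CompactSpace T] [TopologicalSpace X]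
    (f : T × X → EuclideanSpace ℂ (Fin n)) (hf : Continuous f)
    (hfull : ∀ t : T, Submodule.span ℝ (Set.range fun x : X => f (t, x)) = ⊤) :
    ∃ Λ : Finset X, ∀ t : T,
      Submodule.span ℝ ((fun x : X => f (t, x)) '' ↑Λ) = ⊤ := by
  have : FiniteDimensional ℝ (EuclideanSpace ℂ (Fin n)) := .trans ℝ ℂ _
  exact statement5_general (fun x => hf.comp (.prodMk_left x)) hfull
end

section
/- Let k and n be positive integers, set P = [0,1]ᵏ and Q = [0,1]^{k−1} × {0} ⊂ P, and let f : P × [0,1] → ℂⁿ and α : P → ℂⁿ be continuous maps. Assume there are two nondegenerate closed intervals J and J′ with J ∩ J′ = ∅ and J ∪ J′ ⊂ (0,1) such that for every p ∈ P the path f_p := f(p, ·) is ℂ-full on J and ℝ-full on J′. Assume in addition that α(p) = ∫₀¹ f(p,s) ds for all p ∈ Q. Then there exists a continuous function h : P × [0,1] → ℂ \ {0} such that h(p, 0) = h(p, 1) = 1 for all p ∈ P, h(p, s) = 1 for all p ∈ Q and all s ∈ [0,1], and ∫₀¹ h(p,s)·f(p,s) ds = α(p) exactly for all p ∈ P. 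-/
open MeasureTheory Set

/-!
Fullness of `f p` over a field `𝕜`, together with the inverse of a weighted Gram operator, gives
coefficients `c p s`, continuous in `(p, s)`, such that `x = ∫ c p s x • f p s` for every vector
`x`. Over `ℝ` this writes the defect `β p = α p - ∫ f p s` as `∫ r p s • f p s` with `r` real and
supported in `J'`. The factor `1 + r` may vanish, but `1 + r * ζ (N * s)` does not when `ζ` runs
through a parabolic loop of mean `1` that meets the real axis only at `0`; by the Riemann–Lebesgue
lemma it still changes the integral by almost `β p` when `N` is large. This holds uniformly in `p`,
because the lemma applies to functions with values in the Banach space `C(X, E)`. The remaining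
error is as small as desired, so coefficients over `ℂ` supported in `J` remove it by a factor close
to `1`.
-/

open Filter Function Topology InnerProductSpace

section Span

variable {𝕜 E S : Type*} [NontriviallyNormedField 𝕜] [CompleteSpace 𝕜]
  [AddCommGroup E] [Module 𝕜 E] [TopologicalSpace E] [IsTopologicalAddGroup E]
  [ContinuousSMul 𝕜 E] [T2Space E] [FiniteDimensional 𝕜 E] [TopologicalSpace S]
  {g : S → E} {A : Set S}

theorem span_image_closure_s7 (hg : Continuous g) :
    Submodule.span 𝕜 (g '' closure A) = Submodule.span 𝕜 (g '' A) := by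
  refine le_antisymm (Submodule.span_le.2 ?_) (Submodule.span_mono (image_mono subset_closure))
  exact (image_closure_subset_closure_image hg).trans <|
    closure_minimal Submodule.subset_span (Submodule.closed_of_finiteDimensional _)

theorem span_image_interior (hg : Continuous g) (hA : A ⊆ closure (interior A)) :
    Submodule.span 𝕜 (g '' interior A) = Submodule.span 𝕜 (g '' A) := by
  refine le_antisymm (Submodule.span_mono (image_mono interior_subset)) ?_
  rw [← span_image_closure_s7 (A := interior A) hg]
  exact Submodule.span_mono (image_mono hA)

end Span

section GramOperator

variable {𝕜 E : Type*} [RCLike 𝕜] [NormedAddCommGroup E] [InnerProductSpace 𝕜 E] [NormedSpace ℝ E]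
  {w : ℝ → ℝ} {g : ℝ → E} {u v : ℝ}

/-- The Gram operator `x ↦ ∫ s in u..v, w s • ⟪g s, x⟫ • g s` of the path `g` with weight `w`.
Its inverse turns the fullness of `g` into explicit coefficients along `g`. -/
noncomputable def gramOperator (𝕜 : Type*) {E : Type*} [RCLike 𝕜] [NormedAddCommGroup E]
    [InnerProductSpace 𝕜 E] [NormedSpace ℝ E] (w : ℝ → ℝ) (u v : ℝ) (g : ℝ → E) : E →L[𝕜] E :=
  ∫ s in u..v, (w s : 𝕜) • rankOne 𝕜 (g s) (g s)

theorem continuous_gramOperator {X : Type*} [TopologicalSpace X] {f : X → ℝ → E}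
    (hw : Continuous w) (hf : Continuous (uncurry f)) :
    Continuous fun p => gramOperator 𝕜 w u v (f p) := by
  refine intervalIntegral.continuous_parametric_intervalIntegral_of_continuous' ?_ u v
  simp only [rankOne_def]
  fun_prop

variable [FiniteDimensional 𝕜 E]

theorem gramOperator_apply (hw : Continuous w) (hg : Continuous g) (x : E) :
    gramOperator 𝕜 w u v g x = ∫ s in u..v, ((w s : 𝕜) * inner 𝕜 (g s) x) • g s := by
  have := FiniteDimensional.complete 𝕜 E
  have hint : Continuous fun s => (w s : 𝕜) • rankOne 𝕜 (g s) (g s) := by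
    simp only [rankOne_def]
    fun_prop
  rw [gramOperator, ContinuousLinearMap.intervalIntegral_apply (hint.intervalIntegrable u v)]
  simp only [smul_apply, rankOne_apply, smul_smul]

theorem inner_gramOperator_self (hw : Continuous w) (hg : Continuous g) (x : E) :
    inner 𝕜 x (gramOperator 𝕜 w u v g x) =
      ((∫ s in u..v, w s * ‖inner 𝕜 (g s) x‖ ^ 2 : ℝ) : 𝕜) := by
  have := FiniteDimensional.complete 𝕜 E
  have hint : Continuous fun s => ((w s : 𝕜) * inner 𝕜 (g s) x) • g s := by fun_prop
  rw [gramOperator_apply hw hg, ← innerSL_apply_apply 𝕜,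
    ← (innerSL 𝕜 x).intervalIntegral_comp_comm (hint.intervalIntegrable u v),
    ← RCLike.intervalIntegral_ofReal]
  refine intervalIntegral.integral_congr fun s _ => ?_
  simp only [innerSL_apply_apply, inner_smul_right, mul_assoc]
  rw [← inner_conj_symm x (g s), RCLike.mul_conj]
  push_cast
  rfl

theorem gramOperator_injective (hw : Continuous w) (hw₀ : 0 ≤ w) (hwuv : support w ⊆ Ioo u v)
    (hg : Continuous g) (hfull : Submodule.span 𝕜 (g '' support w) = ⊤) :
    Injective (gramOperator 𝕜 w u v g) := by
  refine (injective_iff_map_eq_zero _).2 fun x hx => ?_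
  have hint : ∫ s in u..v, w s * ‖inner 𝕜 (g s) x‖ ^ 2 = 0 := by
    have := inner_gramOperator_self (𝕜 := 𝕜) (u := u) (v := v) hw hg x
    rw [hx, inner_zero_right] at this
    exact_mod_cast this.symm
  have horth : ∀ s ∈ support w, inner 𝕜 x (g s) = 0 := by
    intro s hs
    have hsuv := hwuv hs
    by_contra hne
    have hpos : 0 < w s * ‖inner 𝕜 (g s) x‖ ^ 2 := by
      have hws : 0 < w s := (hw₀ s).lt_of_ne' hs
      have hnorm : 0 < ‖inner 𝕜 (g s) x‖ := by rwa [norm_inner_symm, norm_pos_iff]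
      exact mul_pos hws (pow_pos hnorm 2)
    have hcont : Continuous fun t => w t * ‖inner 𝕜 (g t) x‖ ^ 2 := by fun_prop
    exact (intervalIntegral.integral_pos (hsuv.1.trans hsuv.2) hcont.continuousOn
      (fun t _ => mul_nonneg (hw₀ t) (sq_nonneg _)) ⟨s, Ioo_subset_Icc_self hsuv, hpos⟩).ne' hint
  have hzero : innerₛₗ 𝕜 x = 0 := LinearMap.ext_on hfull (forall_mem_image.2 horth)
  exact inner_self_eq_zero.1 (DFunLike.congr_fun hzero x)

theorem isUnit_gramOperator (hw : Continuous w) (hw₀ : 0 ≤ w) (hwuv : support w ⊆ Ioo u v)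
    (hg : Continuous g) (hfull : Submodule.span 𝕜 (g '' support w) = ⊤) :
    IsUnit (gramOperator 𝕜 w u v g) := by
  have := FiniteDimensional.complete 𝕜 E
  have hinj := gramOperator_injective hw hw₀ hwuv hg hfull
  exact ContinuousLinearMap.isUnit_iff_bijective.2
    ⟨hinj, LinearMap.injective_iff_surjective.1 hinj⟩

end GramOperator

section Coefficients

variable {𝕜 E X : Type*} [RCLike 𝕜] [NormedAddCommGroup E] [NormedSpace ℝ E]
  [TopologicalSpace X] {f : X → ℝ → E} {u v : ℝ} {U : Set ℝ}

theorem exists_continuous_coefficients_of_inner [InnerProductSpace 𝕜 E] [FiniteDimensional 𝕜 E]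
    (hf : Continuous (uncurry f)) (hU : IsOpen U) (hUuv : U ⊆ Ioo u v)
    (hfull : ∀ p, Submodule.span 𝕜 (f p '' U) = ⊤) :
    ∃ c : X → ℝ → E →L[𝕜] 𝕜, Continuous (uncurry c) ∧ (∀ p, ∀ s ∉ U, c p s = 0) ∧
      ∀ p x, ∫ s in u..v, c p s x • f p s = x := by
  have := FiniteDimensional.complete 𝕜 E
  obtain ⟨w, rfl, hw, hw_range⟩ := hU.exists_contDiff_support_eq (n := 0)
  replace hw := hw.continuous
  have hw₀ : 0 ≤ w := fun s => (hw_range (mem_range_self s)).1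
  have hunit p : IsUnit (gramOperator 𝕜 w u v (f p)) :=
    isUnit_gramOperator hw hw₀ hUuv (hf.uncurry_left p) (hfull p)
  let R : X → E →L[𝕜] E := fun p => Ring.inverse (gramOperator 𝕜 w u v (f p))
  have hR : Continuous R := continuous_iff_continuousAt.2 fun p => by
    obtain ⟨G, hG⟩ := hunit p
    exact ContinuousAt.comp (hG ▸ NormedRing.inverse_continuousAt G)
      (continuous_gramOperator hw hf).continuousAt
  refine ⟨fun p s => (w s : 𝕜) • (innerSL 𝕜 (f p s)).comp (R p), ?_, fun p s hs => ?_,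
    fun p x => ?_⟩
  · have hfR : Continuous fun q : X × ℝ => (innerSL 𝕜 (f q.1 q.2)).comp (R q.1) :=
      ((innerSL 𝕜).continuous.comp hf).clm_comp (hR.comp continuous_fst)
    exact (RCLike.continuous_ofReal.comp (hw.comp continuous_snd) : Continuous fun q : X × ℝ =>
      (w q.2 : 𝕜)).smul hfR
  · simp only [notMem_support.1 hs, RCLike.ofReal_zero]
    exact zero_smul 𝕜 ((innerSL 𝕜 (f p s)).comp (R p))
  · have hRx := DFunLike.congr_fun (Ring.mul_inverse_cancel _ (hunit p)) x
    rw [mul_apply_eq_comp, gramOperator_apply hw (hf.uncurry_left p)] at hRx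
    exact hRx

theorem exists_continuous_coefficients [NormedSpace 𝕜 E] [FiniteDimensional 𝕜 E]
    (hf : Continuous (uncurry f)) (hU : IsOpen U) (hUuv : U ⊆ Ioo u v)
    (hfull : ∀ p, Submodule.span 𝕜 (f p '' U) = ⊤) :
    ∃ c : X → ℝ → E →L[𝕜] 𝕜, Continuous (uncurry c) ∧ (∀ p, ∀ s ∉ U, c p s = 0) ∧
      ∀ p x, ∫ s in u..v, c p s x • f p s = x := by
  have := FiniteDimensional.complete 𝕜 E
  let e : E ≃L[𝕜] EuclideanSpace 𝕜 (Fin (Module.finrank 𝕜 E)) :=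
    .ofFinrankEq finrank_euclideanSpace_fin.symm
  let eL : E →L[𝕜] EuclideanSpace 𝕜 (Fin (Module.finrank 𝕜 E)) := e
  have hfull_e p : Submodule.span 𝕜 ((fun s => e (f p s)) '' U) = ⊤ := by
    have himage : (fun s => e (f p s)) '' U = (e.toLinearEquiv : E →ₗ[𝕜] _) '' (f p '' U) :=
      (image_image e (f p) U).symm
    rw [himage, Submodule.span_image, hfull, Submodule.map_top, LinearEquiv.range]
  obtain ⟨c, hc, hcU, hc_repr⟩ := exists_continuous_coefficients_of_inner
    (f := fun p s => e (f p s)) (e.continuous.comp hf) hU hUuv hfull_e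
  refine ⟨fun p s => (c p s).comp eL, hc.clm_comp continuous_const,
    fun p s hs => by simp only [hcU p s hs, ContinuousLinearMap.zero_comp],
    fun p x => e.injective ?_⟩
  have hint : Continuous fun s => c p s (e x) • f p s :=
    ((hc.uncurry_left p).clm_apply continuous_const).smul (hf.uncurry_left p)
  calc e (∫ s in u..v, c p s (e x) • f p s)
      = ∫ s in u..v, e (c p s (e x) • f p s) :=
        (eL.intervalIntegral_comp_comm (hint.intervalIntegrable u v)).symm
    _ = e x := by simpa only [map_smul] using hc_repr p (e x)

end Coefficients

section RiemannLebesgue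

variable {E : Type*} [NormedAddCommGroup E] [NormedSpace ℂ E]

theorem tendsto_intervalIntegral_exp_smul (g : ℝ → E) (u v : ℝ) :
    Tendsto (fun N : ℝ => ∫ s in u..v, Complex.exp (N * s * Complex.I) • g s)
      (cocompact ℝ) (𝓝 0) := by
  have hscale : Tendsto (fun N : ℝ => -(2 * Real.pi)⁻¹ * N) (cocompact ℝ) (cocompact ℝ) :=
    (Homeomorph.mulLeft₀ (-(2 * Real.pi)⁻¹) (by simp [Real.pi_ne_zero]))
      |>.isClosedEmbedding.tendsto_cocompact
  have hset (a b : ℝ) : Tendsto (fun N : ℝ =>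
      ∫ s in Ioc a b, Complex.exp (N * s * Complex.I) • g s)
      (cocompact ℝ) (𝓝 0) := by
    refine ((Real.tendsto_integral_exp_smul_cocompact ((Ioc a b).indicator g)).comp hscale).congr
      fun N => ?_
    rw [comp_apply, ← integral_indicator measurableSet_Ioc]
    congr 1 with s
    have hphase : 2 * Real.pi * -(s * (-(2 * Real.pi)⁻¹ * N)) = N * s := by
      field_simp
    simp only [indicator_apply, Circle.smul_def, Real.fourierChar_apply, hphase, smul_ite,
      smul_zero, Complex.ofReal_mul]
  simpa only [intervalIntegral, sub_zero] using (hset u v).sub (hset v u)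

end RiemannLebesgue

section Oscillation

/-- A path running back and forth on an arc of the parabola `2 * re = im ^ 2`. It has mean `1` but
meets the real axis only at `0`, so `1 + x * parabolicLoop t` oscillates around `1 + x` without
vanishing, for every real `x`. -/
noncomputable def parabolicLoop (t : ℝ) : ℂ :=
  2 * (Real.sin t : ℂ) ^ 2 + 2 * Real.sin t * Complex.I

@[fun_prop]
theorem continuous_parabolicLoop : Continuous parabolicLoop := by
  unfold parabolicLoop
  fun_prop

theorem parabolicLoop_eq_exp (t : ℝ) :
    parabolicLoop t = 1 - (Complex.exp (2 * t * Complex.I) + Complex.exp (-(2 * t) * Complex.I)) / 2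
      + (Complex.exp (t * Complex.I) - Complex.exp (-t * Complex.I)) := by
  have hcos : parabolicLoop t = 1 - Complex.cos (2 * t) + 2 * Complex.I * Complex.sin t := by
    rw [parabolicLoop, Complex.cos_two_mul', Complex.ofReal_sin]
    linear_combination Complex.cos_sq_add_sin_sq t
  rw [hcos, Complex.cos, Complex.sin]
  linear_combination (Complex.exp (-t * Complex.I) - Complex.exp (t * Complex.I)) * Complex.I_sq

theorem one_add_ofReal_mul_parabolicLoop_ne_zero (x t : ℝ) : 1 + (x : ℂ) * parabolicLoop t ≠ 0 := by
  intro h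
  have hform : 1 + (x : ℂ) * parabolicLoop t =
      ⟨1 + x * (2 * Real.sin t ^ 2), x * (2 * Real.sin t)⟩ := by
    rw [Complex.mk_eq_add_mul_I, parabolicLoop]
    push_cast
    ring
  obtain ⟨hre, him⟩ := Complex.ext_iff.1 (hform.symm.trans h)
  simp only [Complex.zero_re, Complex.zero_im] at hre him
  exact one_ne_zero (by linear_combination hre - Real.sin t * him)

theorem tendsto_intervalIntegral_parabolicLoop_smul {E : Type*} [NormedAddCommGroup E]
    [NormedSpace ℂ E] {g : ℝ → E} (hg : Continuous g) (u v : ℝ) :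
    Tendsto (fun N : ℝ => ∫ s in u..v, parabolicLoop (N * s) • g s) (cocompact ℝ)
      (𝓝 (∫ s in u..v, g s)) := by
  let J (M : ℝ) : E := ∫ s in u..v, Complex.exp (M * s * Complex.I) • g s
  have hJ {c : ℝ} (hc : c ≠ 0) : Tendsto (fun N => J (c * N)) (cocompact ℝ) (𝓝 0) :=
    (tendsto_intervalIntegral_exp_smul g u v).comp
      (Homeomorph.mulLeft₀ c hc).isClosedEmbedding.tendsto_cocompact
  have hcos := ((hJ (c := 2) (by simp)).add (hJ (c := -2) (by simp))).const_smul (2⁻¹ : ℂ)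
  have hsin := (hJ (c := 1) (by simp)).sub (hJ (c := -1) (by simp))
  have hlim := ((tendsto_const_nhds (x := ∫ s in u..v, g s)).sub hcos).add hsin
  rw [add_zero, smul_zero, sub_zero, sub_zero, add_zero] at hlim
  refine hlim.congr fun N => ?_
  let e (M s : ℝ) : E := Complex.exp (M * s * Complex.I) • g s
  have hint (M : ℝ) : IntervalIntegrable (e M) volume u v :=
    Continuous.intervalIntegrable (by fun_prop) u v
  have hint_cos : IntervalIntegrable (fun s => (2⁻¹ : ℂ) • (e (2 * N) s + e (-2 * N) s))
      volume u v := ((hint _).add (hint _)).smul _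
  have hint_sin := (hint (1 * N)).sub (hint (-1 * N))
  have hint_g : IntervalIntegrable g volume u v := hg.intervalIntegrable u v
  rw [← intervalIntegral.integral_add (hint _) (hint _),
    ← intervalIntegral.integral_sub (hint _) (hint _), ← intervalIntegral.integral_smul,
    ← intervalIntegral.integral_sub hint_g hint_cos,
    ← intervalIntegral.integral_add (hint_g.sub hint_cos) hint_sin]
  refine intervalIntegral.integral_congr fun s _ => ?_
  simp only [e, parabolicLoop_eq_exp]
  push_cast
  simp only [one_mul, neg_mul, mul_assoc]
  module

theorem tendstoUniformly_intervalIntegral_parabolicLoop_smul {E X : Type*} [NormedAddCommGroup E]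
    [NormedSpace ℂ E] [NormedSpace ℝ E] [CompleteSpace E] [TopologicalSpace X] [CompactSpace X]
    {F : X → ℝ → E} (hF : Continuous (uncurry F)) (u v : ℝ) :
    TendstoUniformly (fun (N : ℝ) p => ∫ s in u..v, parabolicLoop (N * s) • F p s)
      (fun p => ∫ s in u..v, F p s) (cocompact ℝ) := by
  -- The real structure `C(X, E)` inherits from `E` is not syntactically the complex one restricted.
  let : NormedSpace ℝ C(X, E) := NormedSpace.complexToReal
  let G : C(ℝ, C(X, E)) := ContinuousMap.curry ⟨fun q => F q.2 q.1, hF.comp continuous_swap⟩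
  have heval {H : ℝ → C(X, E)} (hH : Continuous H) (p : X) :
      (∫ s in u..v, H s) p = ∫ s in u..v, H s p :=
    ((ContinuousMap.evalCLM ℂ p).intervalIntegral_comp_comm (hH.intervalIntegrable u v)).symm
  have hloop (N : ℝ) : Continuous fun s => parabolicLoop (N * s) • G s := by fun_prop
  have hlim := ContinuousMap.tendsto_iff_tendstoUniformly.1
    (tendsto_intervalIntegral_parabolicLoop_smul G.continuous u v)
  convert! hlim using 1
  · exact funext fun N => funext fun p => (heval (hloop N) p).symm
  · exact funext fun p => (heval G.continuous p).symm

end Oscillation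

section Multiplier

variable {X : Type*} [TopologicalSpace X] {A B : Set ℝ} {h g : X → ℝ → ℂ}

/-- The notion of a deformation factor supported in `A`: a continuous function of `(p, s)` with
values in `ℂ \ {0}` that equals `1` for `s` outside `A`. -/
structure IsMultiplierOn (h : X → ℝ → ℂ) (A : Set ℝ) : Prop where
  continuous : Continuous (uncurry h)
  ne_zero : ∀ p s, h p s ≠ 0
  eq_one_of_notMem : ∀ p, ∀ s ∉ A, h p s = 1

theorem IsMultiplierOn.mono (hh : IsMultiplierOn h A) (hAB : A ⊆ B) : IsMultiplierOn h B :=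
  ⟨hh.continuous, hh.ne_zero, fun p s hs => hh.eq_one_of_notMem p s fun hsA => hs (hAB hsA)⟩

theorem IsMultiplierOn.mul (hh : IsMultiplierOn h A) (hg : IsMultiplierOn g B) :
    IsMultiplierOn (fun p s => h p s * g p s) (A ∪ B) where
  continuous := hh.continuous.mul hg.continuous
  ne_zero p s := mul_ne_zero (hh.ne_zero p s) (hg.ne_zero p s)
  eq_one_of_notMem p s hs := by
    rw [mem_union, not_or] at hs
    rw [hh.eq_one_of_notMem p s hs.1, hg.eq_one_of_notMem p s hs.2, one_mul]

theorem IsMultiplierOn.mul_eq_add_sub_one (hh : IsMultiplierOn h A) (hg : IsMultiplierOn g B)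
    (hAB : Disjoint A B) (p : X) (s : ℝ) : h p s * g p s = h p s + g p s - 1 := by
  by_cases hs : s ∈ A
  · rw [hg.eq_one_of_notMem p s (disjoint_left.1 hAB hs)]
    ring
  · rw [hh.eq_one_of_notMem p s hs]
    ring

variable {E : Type*} [NormedAddCommGroup E] [NormedSpace ℂ E] {f : X → ℝ → E} {u v : ℝ}

theorem IsMultiplierOn.intervalIntegrable_smul (hh : IsMultiplierOn h A)
    (hf : Continuous (uncurry f)) (p : X) :
    IntervalIntegrable (fun s => h p s • f p s) volume u v :=
  ((hh.continuous.uncurry_left p).smul (hf.uncurry_left p)).intervalIntegrable u v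

variable [NormedSpace ℝ E]

theorem IsMultiplierOn.continuous_integral_smul (hh : IsMultiplierOn h A)
    (hf : Continuous (uncurry f)) : Continuous fun p => ∫ s in u..v, h p s • f p s :=
  intervalIntegral.continuous_parametric_intervalIntegral_of_continuous'
    (hh.continuous.smul hf) u v

theorem IsMultiplierOn.integral_mul_smul (hh : IsMultiplierOn h A) (hg : IsMultiplierOn g B)
    (hAB : Disjoint A B) (hf : Continuous (uncurry f)) (p : X) :
    ∫ s in u..v, (h p s * g p s) • f p s =
      (∫ s in u..v, h p s • f p s) + (∫ s in u..v, g p s • f p s) - ∫ s in u..v, f p s := by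
  have hint_h := hh.intervalIntegrable_smul (u := u) (v := v) hf p
  have hint_g := hg.intervalIntegrable_smul (u := u) (v := v) hf p
  rw [← intervalIntegral.integral_add hint_h hint_g, ← intervalIntegral.integral_sub
    (hint_h.add hint_g) ((hf.uncurry_left p).intervalIntegrable u v)]
  refine intervalIntegral.integral_congr fun s _ => ?_
  simp only [hh.mul_eq_add_sub_one hg hAB]
  module

variable [FiniteDimensional ℂ E] [CompactSpace X]

theorem exists_isMultiplierOn_norm_integral_smul_sub_lt {V : Set ℝ} {β : X → E}
    (hf : Continuous (uncurry f)) (hβ : Continuous β) (hV : IsOpen V) (hVuv : V ⊆ Ioo u v)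
    (hfull : ∀ p, Submodule.span ℝ (f p '' V) = ⊤) {ε : ℝ} (hε : 0 < ε) :
    ∃ h : X → ℝ → ℂ, IsMultiplierOn h V ∧ (∀ p, β p = 0 → ∀ s, h p s = 1) ∧
      ∀ p, ‖(∫ s in u..v, h p s • f p s) - ((∫ s in u..v, f p s) + β p)‖ < ε := by
  have := FiniteDimensional.complete ℂ E
  have : FiniteDimensional ℝ E := FiniteDimensional.trans ℝ ℂ E
  obtain ⟨c, hc, hcV, hc_repr⟩ := exists_continuous_coefficients (𝕜 := ℝ) hf hV hVuv hfull
  have hcβ : Continuous (uncurry fun p s => c p s (β p)) :=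
    hc.clm_apply (hβ.comp continuous_fst)
  have hF : Continuous (uncurry fun p s => c p s (β p) • f p s) := hcβ.smul hf
  obtain ⟨N, hN⟩ := (Metric.tendstoUniformly_iff.1
    (tendstoUniformly_intervalIntegral_parabolicLoop_smul hF u v) ε hε).exists
  refine ⟨fun p s => 1 + (c p s (β p) : ℂ) * parabolicLoop (N * s), ⟨?_, ?_, ?_⟩, ?_, fun p => ?_⟩
  · have hloop : Continuous fun q : X × ℝ => parabolicLoop (N * q.2) := by fun_prop
    exact continuous_const.add ((Complex.continuous_ofReal.comp hcβ).mul hloop)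
  · exact fun p s => one_add_ofReal_mul_parabolicLoop_ne_zero _ _
  · intro p s hs
    simp only [hcV p s hs, zero_apply, Complex.ofReal_zero, zero_mul, add_zero]
  · intro p hp s
    simp only [hp, map_zero, Complex.ofReal_zero, zero_mul, add_zero]
  · have hint_f : IntervalIntegrable (f p) volume u v :=
      (hf.uncurry_left p).intervalIntegrable u v
    have hint_osc : IntervalIntegrable (fun s => parabolicLoop (N * s) • c p s (β p) • f p s)
        volume u v := by
      refine Continuous.intervalIntegrable ?_ u v
      exact Continuous.smul (by fun_prop) (hF.uncurry_left p)
    have hsplit : ∫ s in u..v, (1 + (c p s (β p) : ℂ) * parabolicLoop (N * s)) • f p s =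
        (∫ s in u..v, f p s) + ∫ s in u..v, parabolicLoop (N * s) • c p s (β p) • f p s := by
      rw [← intervalIntegral.integral_add hint_f hint_osc]
      refine intervalIntegral.integral_congr fun s _ => ?_
      simp only [RCLike.real_smul_eq_coe_smul (K := ℂ), RCLike.ofReal_eq_complex_ofReal]
      module
    have hlt := hN p
    rwa [hc_repr, dist_eq_norm', ← add_sub_add_left_eq_sub _ _ (∫ s in u..v, f p s), ← hsplit]
      at hlt

theorem exists_isMultiplierOn_integral_smul_eq_of_norm_lt {U : Set ℝ}
    (hf : Continuous (uncurry f)) (hU : IsOpen U) (hUuv : U ⊆ Ioo u v)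
    (hfull : ∀ p, Submodule.span ℂ (f p '' U) = ⊤) :
    ∃ ε > 0, ∀ e : X → E, Continuous e → (∀ p, ‖e p‖ < ε) →
      ∃ h : X → ℝ → ℂ, IsMultiplierOn h U ∧ (∀ p, e p = 0 → ∀ s, h p s = 1) ∧
        ∀ p, ∫ s in u..v, h p s • f p s = (∫ s in u..v, f p s) + e p := by
  obtain ⟨c, hc, hcU, hc_repr⟩ := exists_continuous_coefficients (𝕜 := ℂ) hf hU hUuv hfull
  obtain ⟨M, hM⟩ := (isCompact_univ.prod isCompact_Icc).exists_bound_of_continuousOn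
    (hc.continuousOn (s := univ ×ˢ Icc u v))
  have hcM (p : X) (s : ℝ) : ‖c p s‖ ≤ |M| := by
    by_cases hs : s ∈ U
    · exact (hM (p, s) ⟨mem_univ p, Ioo_subset_Icc_self (hUuv hs)⟩).trans (le_abs_self M)
    · rw [hcU p s hs, norm_zero]
      exact abs_nonneg M
  refine ⟨1 / (|M| + 1), by positivity, fun e he he_lt =>
    ⟨fun p s => 1 + c p s (e p), ⟨?_, fun p s h₀ => ?_, ?_⟩, ?_, fun p => ?_⟩⟩
  · exact continuous_const.add (hc.clm_apply (he.comp continuous_fst))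
  · have hsmall : ‖c p s (e p)‖ < 1 :=
      calc ‖c p s (e p)‖ ≤ ‖c p s‖ * ‖e p‖ := (c p s).le_opNorm (e p)
        _ ≤ (|M| + 1) * ‖e p‖ := by gcongr; linarith [hcM p s]
        _ < 1 := by rw [mul_comm]; exact (lt_div_iff₀ (by positivity)).1 (he_lt p)
    rw [eq_neg_of_add_eq_zero_right h₀, norm_neg, norm_one] at hsmall
    exact hsmall.false
  · intro p s hs
    simp only [hcU p s hs, zero_apply, add_zero]
  · intro p hp s
    simp only [hp, map_zero, add_zero]
  · have hfp : Continuous (f p) := hf.uncurry_left p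
    have hcorr : Continuous fun s => c p s (e p) • f p s :=
      ((hc.uncurry_left p).clm_apply continuous_const).smul hfp
    simp only [add_smul, one_smul]
    rw [intervalIntegral.integral_add (hfp.intervalIntegrable u v)
      (hcorr.intervalIntegrable u v), hc_repr]

theorem exists_isMultiplierOn_integral_smul_eq {U V : Set ℝ} {α : X → E}
    (hf : Continuous (uncurry f)) (hα : Continuous α) (hU : IsOpen U) (hV : IsOpen V)
    (hUV : Disjoint U V) (hUuv : U ⊆ Ioo u v) (hVuv : V ⊆ Ioo u v)
    (hfullU : ∀ p, Submodule.span ℂ (f p '' U) = ⊤)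
    (hfullV : ∀ p, Submodule.span ℝ (f p '' V) = ⊤) :
    ∃ h : X → ℝ → ℂ, IsMultiplierOn h (U ∪ V) ∧
      (∀ p, α p = ∫ s in u..v, f p s → ∀ s, h p s = 1) ∧
      ∀ p, ∫ s in u..v, h p s • f p s = α p := by
  have hint : Continuous fun p => ∫ s in u..v, f p s :=
    intervalIntegral.continuous_parametric_intervalIntegral_of_continuous' hf u v
  obtain ⟨ε, hε, hcorrect⟩ := exists_isMultiplierOn_integral_smul_eq_of_norm_lt hf hU hUuv hfullU
  obtain ⟨h₁, hh₁, h₁_eq_one, h₁_lt⟩ := exists_isMultiplierOn_norm_integral_smul_sub_lt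
    (β := fun p => α p - ∫ s in u..v, f p s) hf (hα.sub hint) hV hVuv hfullV hε
  simp only [add_sub_cancel] at h₁_lt
  obtain ⟨h₂, hh₂, h₂_eq_one, h₂_int⟩ := hcorrect (fun p => α p - ∫ s in u..v, h₁ p s • f p s)
    (hα.sub (hh₁.continuous_integral_smul hf)) fun p => norm_sub_rev (α p) _ ▸ h₁_lt p
  refine ⟨fun p s => h₂ p s * h₁ p s, hh₂.mul hh₁, fun p hp s => ?_, fun p => ?_⟩
  · have h₁_one : ∀ s, h₁ p s = 1 := h₁_eq_one p (sub_eq_zero.2 hp)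
    have h₂_one : h₂ p s = 1 := h₂_eq_one p (by simp only [h₁_one, one_smul, hp, sub_self]) s
    simp only [h₁_one, h₂_one, one_mul]
  · rw [hh₂.integral_mul_smul hh₁ hUV hf, h₂_int]
    abel

end Multiplier

section Compact

variable {X : Type*} [TopologicalSpace X] {u v : ℝ}

theorem continuous_uncurry_IccExtend_domRestrict {E : Type*} [TopologicalSpace E] {f : X → ℝ → E}
    (hf : ContinuousOn (uncurry f) (univ ×ˢ Icc u v)) (huv : u ≤ v) :
    Continuous (uncurry fun p => IccExtend huv ((Icc u v).domRestrict (f p))) := by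
  have hproj : Continuous fun q : X × ℝ => (q.1, (projIcc u v huv q.2 : ℝ)) :=
    continuous_fst.prodMk (continuous_subtype_val.comp (continuous_projIcc.comp continuous_snd))
  exact hf.comp_continuous hproj fun q => ⟨mem_univ _, (projIcc u v huv q.2).2⟩

variable {E : Type*} [NormedAddCommGroup E] [NormedSpace ℂ E] [NormedSpace ℝ E]
  [FiniteDimensional ℂ E] {J J' : Set ℝ} {f : X → ℝ → E} {α : X → E}

theorem exists_isMultiplierOn_integral_smul_eq_of_continuousOn [CompactSpace X] (huv : u ≤ v)
    (hf : ContinuousOn (uncurry f) (univ ×ˢ Icc u v)) (hα : Continuous α)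
    (hJ : J ⊆ closure (interior J)) (hJ' : J' ⊆ closure (interior J')) (hJJ' : Disjoint J J')
    (hJuv : J ⊆ Ioo u v) (hJ'uv : J' ⊆ Ioo u v)
    (hCfull : ∀ p, Submodule.span ℂ (f p '' J) = ⊤)
    (hRfull : ∀ p, Submodule.span ℝ (f p '' J') = ⊤) :
    ∃ h : X → ℝ → ℂ, IsMultiplierOn h (J ∪ J') ∧
      (∀ p, α p = ∫ s in u..v, f p s → ∀ s, h p s = 1) ∧
      ∀ p, ∫ s in u..v, h p s • f p s = α p := by
  have : FiniteDimensional ℝ E := FiniteDimensional.trans ℝ ℂ E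
  let g (p : X) : ℝ → E := IccExtend huv ((Icc u v).domRestrict (f p))
  have hg : Continuous (uncurry g) := continuous_uncurry_IccExtend_domRestrict hf huv
  have hgf (p : X) : EqOn (g p) (f p) (Icc u v) := fun s hs => IccExtend_of_mem huv _ hs
  have hgf_image (p : X) {A : Set ℝ} (hA : A ⊆ Ioo u v) : g p '' A = f p '' A :=
    ((hgf p).mono (hA.trans Ioo_subset_Icc_self)).image_eq
  have hgf_integral (p : X) (φ : ℝ → ℂ) : ∫ s in u..v, φ s • g p s = ∫ s in u..v, φ s • f p s :=
    intervalIntegral.integral_congr fun s hs => by simp only [hgf p (uIcc_of_le huv ▸ hs)]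
  have hgC (p : X) : Submodule.span ℂ (g p '' interior J) = ⊤ := by
    rw [span_image_interior (hg.uncurry_left p) hJ, hgf_image p hJuv, hCfull p]
  have hgR (p : X) : Submodule.span ℝ (g p '' interior J') = ⊤ := by
    rw [span_image_interior (hg.uncurry_left p) hJ', hgf_image p hJ'uv, hRfull p]
  obtain ⟨h, hh, h_eq_one, h_int⟩ := exists_isMultiplierOn_integral_smul_eq hg hα
    isOpen_interior isOpen_interior (hJJ'.mono interior_subset interior_subset)
    (interior_subset.trans hJuv) (interior_subset.trans hJ'uv) hgC hgR
  refine ⟨h, hh.mono (union_subset_union interior_subset interior_subset), fun p hp => ?_,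
    fun p => (hgf_integral p (h p)).symm.trans (h_int p)⟩
  exact h_eq_one p (hp.trans (by simpa only [one_smul] using (hgf_integral p fun _ => 1).symm))

theorem statement7_general {K : Set X} (hK : IsCompact K) (huv : u ≤ v)
    (hf : ContinuousOn (fun q : X × ℝ => f q.1 q.2) (K ×ˢ Icc u v)) (hα : ContinuousOn α K)
    (hJ : J ⊆ closure (interior J)) (hJ' : J' ⊆ closure (interior J')) (hJJ' : Disjoint J J')
    (hJuv : J ⊆ Ioo u v) (hJ'uv : J' ⊆ Ioo u v)
    (hCfull : ∀ p ∈ K, Submodule.span ℂ (f p '' J) = ⊤)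
    (hRfull : ∀ p ∈ K, Submodule.span ℝ (f p '' J') = ⊤) :
    ∃ h : X → ℝ → ℂ, ContinuousOn (fun q : X × ℝ => h q.1 q.2) (K ×ˢ Icc u v) ∧
      (∀ p ∈ K, ∀ s ∈ Icc u v, h p s ≠ 0) ∧
      (∀ p ∈ K, h p u = 1 ∧ h p v = 1) ∧
      (∀ p ∈ K, α p = ∫ s in u..v, f p s → ∀ s ∈ Icc u v, h p s = 1) ∧
      (∀ p ∈ K, (∫ s in u..v, h p s • f p s) = α p) := by
  have := isCompact_iff_compactSpace.1 hK
  have hfK : ContinuousOn (uncurry fun p : K => f p) (univ ×ˢ Icc u v) :=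
    hf.comp (f := fun q : K × ℝ => ((q.1 : X), q.2)) (by fun_prop) fun q hq => ⟨q.1.2, hq.2⟩
  obtain ⟨g, hg, g_eq_one, g_int⟩ := exists_isMultiplierOn_integral_smul_eq_of_continuousOn huv
    hfK hα.domRestrict hJ hJ' hJJ' hJuv hJ'uv (fun p => hCfull p p.2) fun p => hRfull p p.2
  have hsupp : J ∪ J' ⊆ Ioo u v := union_subset hJuv hJ'uv
  let h : X → ℝ → ℂ := extend Subtype.val g fun _ _ => 1
  have h_eq (p : K) : h p = g p := Subtype.val_injective.extend_apply g _ p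
  have h_cont : ContinuousOn (fun q : X × ℝ => h q.1 q.2) (K ×ˢ Icc u v) := by
    have hprod : Continuous fun q : ↥(K ×ˢ Icc u v) => ((⟨q.1.1, q.2.1⟩ : K), q.1.2) := by fun_prop
    refine continuousOn_iff_continuous_domRestrict.2 ((hg.continuous.comp hprod).congr fun q => ?_)
    exact congrFun (h_eq ⟨q.1.1, q.2.1⟩).symm q.1.2
  refine ⟨h, h_cont, fun p hp s _ => ?_, fun p hp => ?_, fun p hp hαp s _ => ?_, fun p hp => ?_⟩ <;>
    rw [h_eq ⟨p, hp⟩]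
  · exact hg.ne_zero _ s
  · exact ⟨hg.eq_one_of_notMem _ u fun hu => (hsupp hu).1.false,
      hg.eq_one_of_notMem _ v fun hv => (hsupp hv).2.false⟩
  · exact g_eq_one ⟨p, hp⟩ hαp s
  · exact g_int ⟨p, hp⟩

end Compact

/-- Corollary 3.5, addendum. Let `P = [0,1]ᵏ` and
`Q = [0,1]^{k-1} × {0} ⊂ P` (points of `P` with vanishing last coordinate), and let
`f : P × [0,1] → ℂⁿ` and `α : P → ℂⁿ` be continuous. Assume there are disjoint
nondegenerate closed intervals `J = [a,b]` and `J' = [c,d]` in `(0,1)` such that each path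
`f_p` is ℂ-full on `J` and ℝ-full on `J'`, and that `α(p) = ∫₀¹ f(p,s) ds` for all `p ∈ Q`.
Then there is a continuous nowhere-vanishing `h : P × [0,1] → ℂ*` with
`h(p,0) = h(p,1) = 1` for all `p ∈ P`, `h(p,s) = 1` for all `p ∈ Q` and `s ∈ [0,1]`, and
`∫₀¹ h(p,s) • f(p,s) ds = α(p)` for all `p ∈ P`. -/
theorem statement7 (k n : ℕ) (hk : 0 < k) (hn : 0 < n)
    (f : (Fin k → ℝ) → ℝ → EuclideanSpace ℂ (Fin n))
    (α : (Fin k → ℝ) → EuclideanSpace ℂ (Fin n))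
    (hf : ContinuousOn (fun q : (Fin k → ℝ) × ℝ => f q.1 q.2)
      (Icc (0 : Fin k → ℝ) 1 ×ˢ Icc (0:ℝ) 1))
    (hα : ContinuousOn α (Icc (0 : Fin k → ℝ) 1))
    (a b c d : ℝ) (hab : a < b) (hcd : c < d)
    (hJJ' : Disjoint (Icc a b) (Icc c d))
    (hJ : Icc a b ⊆ Ioo (0:ℝ) 1) (hJ' : Icc c d ⊆ Ioo (0:ℝ) 1)
    (hCfull : ∀ p ∈ Icc (0 : Fin k → ℝ) 1, Submodule.span ℂ (f p '' Icc a b) = ⊤)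
    (hRfull : ∀ p ∈ Icc (0 : Fin k → ℝ) 1, Submodule.span ℝ (f p '' Icc c d) = ⊤)
    (hαQ : ∀ p ∈ Icc (0 : Fin k → ℝ) 1, p ⟨k - 1, by omega⟩ = 0 →
      α p = ∫ s in (0:ℝ)..1, f p s) :
    ∃ h : (Fin k → ℝ) → ℝ → ℂ,
      ContinuousOn (fun q : (Fin k → ℝ) × ℝ => h q.1 q.2)
        (Icc (0 : Fin k → ℝ) 1 ×ˢ Icc (0:ℝ) 1) ∧
      (∀ p ∈ Icc (0 : Fin k → ℝ) 1, ∀ s ∈ Icc (0:ℝ) 1, h p s ≠ 0) ∧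
      (∀ p ∈ Icc (0 : Fin k → ℝ) 1, h p 0 = 1 ∧ h p 1 = 1) ∧
      (∀ p ∈ Icc (0 : Fin k → ℝ) 1, p ⟨k - 1, by omega⟩ = 0 →
        ∀ s ∈ Icc (0:ℝ) 1, h p s = 1) ∧
      (∀ p ∈ Icc (0 : Fin k → ℝ) 1, (∫ s in (0:ℝ)..1, h p s • f p s) = α p) := by
  obtain ⟨h, hcont, hne, hends, heq_one, hint⟩ := statement7_general isCompact_Icc zero_le_one hf hα
    (closure_interior_Icc hab.ne).ge (closure_interior_Icc hcd.ne).ge hJJ' hJ hJ' hCfull hRfull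
  exact ⟨h, hcont, hne, hends, fun p hp hp₀ => heq_one p hp (hαQ p hp hp₀), hint⟩
end

section
/- For every integer n ≥ 3, the hyperquadric 𝐐^{n−2} = {[z₁ : ⋯ : zₙ] ∈ ℂℙ^{n−1} : z₁² + ⋯ + zₙ² = 0}, equipped with the subspace topology inherited from complex projective space ℂℙ^{n−1}, is a nonempty, path-connected, simply connected topological space. -/
open scoped LinearAlgebra.Projectivization

/-- The quotient topology on the projectivization of a topological vector space:
`ℙ K V` is the quotient of the subspace `{v : V // v ≠ 0}` of `V`. -/
instance projectivizationTopology (K V : Type*) [DivisionRing K] [AddCommGroup V]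
    [Module K V] [TopologicalSpace V] : TopologicalSpace (Projectivization K V) :=
  inferInstanceAs (TopologicalSpace (Quotient (projectivizationSetoid K V)))

/-- The hyperquadric `𝐐^{n-2} = {[z₁ : ⋯ : zₙ] ∈ ℂℙ^{n-1} : z₁² + ⋯ + zₙ² = 0}`,
a subset of the complex projective space `ℙ ℂ (Fin n → ℂ)`.  The defining condition
is invariant under scaling of the homogeneous coordinates. -/
def hyperquadric (n : ℕ) : Set (ℙ ℂ (Fin n → ℂ)) :=
  {x | ∃ (z : Fin n → ℂ) (hz : z ≠ 0), (∑ i, z i ^ 2) = 0 ∧ Projectivization.mk ℂ z hz = x}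

/-!
Let `Q` be a nondegenerate quadratic form. For an isotropic vector `p`, the part of the quadric
`Q = 0` off the hyperplane polar to `p` is, by stereographic projection from `p`, a retract of the
affine hyperplane `polar Q p v = 1`, hence contractible. Two points of the quadric always lie in a
common such chart. Two overlapping charts meet in a path connected set: the complex line joining two
points of the hyperplane attached to `p` projects to the quadric, and it leaves the chart of `p'`
only at the finitely many zeros of a polynomial. The charts around a fixed base point thus form an
open cover by simply connected sets with path connected pairwise intersections, and the elementary
half of the Seifert–van Kampen theorem shows that the quadric is simply connected.
-/

section OpenCover

open Set

variable {X ι : Type*} [TopologicalSpace X]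

theorem homotopic_of_range_subset {U : Set X} (hU : IsSimplyConnected U) {x y : X}
    {γ γ' : Path x y} (hγ : range γ ⊆ U) (hγ' : range γ' ⊆ U) : γ.Homotopic γ' := by
  have := hU.simplyConnectedSpace
  let corestrict (δ : Path x y) (hδ : range δ ⊆ U) :
      Path (⟨x, hδ ⟨0, δ.source⟩⟩ : U) ⟨y, hδ ⟨1, δ.target⟩⟩ :=
    { toFun t := ⟨δ t, hδ (mem_range_self t)⟩
      source' := by simp
      target' := by simp }
  exact (SimplyConnectedSpace.paths_homotopic (corestrict γ hγ) (corestrict γ' hγ')).map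
    ⟨Subtype.val, continuous_subtype_val⟩

theorem exists_homotopic_trans_range_subset {U V : Set X} (hU : IsSimplyConnected U) {x y z : X}
    {γ : Path x y} {δ : Path y z} (hγ : range γ ⊆ U) (hδ : range δ ⊆ U)
    (hxz : JoinedIn (U ∩ V) x z) :
    ∃ η : Path x z, range η ⊆ V ∧ (γ.trans δ).Homotopic η := by
  obtain ⟨η, hη⟩ := hxz
  refine ⟨η, range_subset_iff.2 fun t => (hη t).2, homotopic_of_range_subset hU ?_ ?_⟩
  · rw [Path.trans_range]
    exact union_subset hγ hδ
  · exact range_subset_iff.2 fun t => (hη t).1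

theorem exists_homotopic_range_subset_of_isOpen_cover {U : ι → Set X}
    (hopen : ∀ i, IsOpen (U i)) (hcover : ∀ x, ∃ i, x ∈ U i)
    (hsc : ∀ i, IsSimplyConnected (U i)) (hpc : ∀ i j, IsPathConnected (U i ∩ U j)) {x y : X}
    (hx : ∀ i, x ∈ U i) (γ : Path x y) {i : ι} (hy : y ∈ U i) :
    ∃ δ : Path x y, range δ ⊆ U i ∧ γ.Homotopic δ := by
  obtain ⟨t, ht₀, ht_mono, ⟨N, hN⟩, ht⟩ := exists_monotone_Icc_subset_open_cover_unitInterval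
    (fun i => (hopen i).preimage γ.continuous) (fun s _ => mem_iUnion.2 (hcover (γ s)))
  have hγ₀ (j : ι) : γ 0 ∈ U j := γ.source.symm ▸ hx j
  have initial_segment (k : ℕ) : ∀ j, γ (t k) ∈ U j →
      ∃ δ : Path (γ 0) (γ (t k)), range δ ⊆ U j ∧ (γ.subpath 0 (t k)).Homotopic δ := by
    induction k with
    | zero =>
      intro j _
      rw [ht₀, Path.subpath_self]
      exact ⟨Path.refl _, by simpa using hγ₀ j, .refl _⟩
    | succ k ih =>
      intro j hj
      obtain ⟨l, hl⟩ := ht k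
      have hle : t k ≤ t (k + 1) := ht_mono k.le_succ
      obtain ⟨δ, hδ, hδγ⟩ := ih l (hl (left_mem_Icc.2 hle))
      have hseg : range (γ.subpath (t k) (t (k + 1))) ⊆ U l := by
        rw [Path.range_subpath_of_le _ _ _ hle]
        exact image_subset_iff.2 hl
      obtain ⟨η, hη, hη_hom⟩ := exists_homotopic_trans_range_subset (hsc l) hδ hseg
        ((hpc l j).joinedIn _ ⟨hγ₀ l, hγ₀ j⟩ _ ⟨hl (right_mem_Icc.2 hle), hj⟩)
      have hsplit : (γ.subpath 0 (t (k + 1))).Homotopic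
          ((γ.subpath 0 (t k)).trans (γ.subpath (t k) (t (k + 1)))) :=
        .symm ⟨Path.Homotopy.subpathTransSubpath γ 0 (t k) (t (k + 1))⟩
      exact ⟨η, hη, hsplit.trans ((hδγ.hcomp (.refl _)).trans hη_hom)⟩
  have whole := initial_segment N i
  rw [hN N le_rfl, Path.subpath_zero_one] at whole
  obtain ⟨δ, hδ, hδγ⟩ := whole (γ.target.symm ▸ hy)
  exact ⟨δ.cast γ.source.symm γ.target.symm, hδ, hδγ.pathCast γ.source.symm γ.target.symm⟩

theorem simplyConnectedSpace_of_paths_from_homotopic [PathConnectedSpace X] (x₀ : X)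
    (h : ∀ (y : X) (γ γ' : Path x₀ y), γ.Homotopic γ') : SimplyConnectedSpace X := by
  refine simply_connected_iff_paths_homotopic'.2 ⟨inferInstance, fun {x y} γ γ' => ?_⟩
  let σ := PathConnectedSpace.somePath x₀ x
  have hσ : (Path.Homotopic.Quotient.mk σ).trans (.mk γ) = .trans (.mk σ) (.mk γ') :=
    Path.Homotopic.Quotient.eq.2 (h y (σ.trans γ) (σ.trans γ'))
  rw [← Path.Homotopic.Quotient.eq]
  simpa [← Path.Homotopic.Quotient.trans_assoc] using
    congrArg (Path.Homotopic.Quotient.mk σ).symm.trans hσ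

theorem simplyConnectedSpace_of_isOpen_cover {U : ι → Set X} (hopen : ∀ i, IsOpen (U i))
    (hcover : ∀ x, ∃ i, x ∈ U i) (hsc : ∀ i, IsSimplyConnected (U i))
    (hpc : ∀ i j, IsPathConnected (U i ∩ U j)) {x₀ : X} (hx₀ : ∀ i, x₀ ∈ U i) :
    SimplyConnectedSpace X := by
  have joined (y : X) : Joined x₀ y := by
    obtain ⟨i, hi⟩ := hcover y
    exact ((hsc i).isPathConnected.joinedIn x₀ (hx₀ i) y hi).joined
  have : PathConnectedSpace X := ⟨⟨x₀⟩, fun x y => (joined x).symm.trans (joined y)⟩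
  refine simplyConnectedSpace_of_paths_from_homotopic x₀ fun y γ γ' => ?_
  obtain ⟨i, hi⟩ := hcover y
  obtain ⟨δ, hδ, hγδ⟩ :=
    exists_homotopic_range_subset_of_isOpen_cover hopen hcover hsc hpc hx₀ γ hi
  obtain ⟨δ', hδ', hγδ'⟩ :=
    exists_homotopic_range_subset_of_isOpen_cover hopen hcover hsc hpc hx₀ γ' hi
  exact hγδ.trans ((homotopic_of_range_subset (hsc i) hδ hδ').trans hγδ'.symm)

theorem contractibleSpace_of_leftInverse {Y : Type*} [TopologicalSpace Y] [ContractibleSpace X]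
    (f : C(X, Y)) (g : C(Y, X)) (hfg : Function.LeftInverse f g) : ContractibleSpace Y := by
  rw [contractible_iff_id_nullhomotopic]
  convert! ((id_nullhomotopic X).comp_left g).comp_right f using 1
  exact ContinuousMap.ext fun y => (hfg y).symm

end OpenCover

section AffineChart

variable {K V : Type*} [DivisionRing K] [AddCommGroup V] [Module K V] {f : V →ₗ[K] K}

/-- The affine chart `{[v] : f v ≠ 0}` of projective space given by a linear functional `f`. -/
def affineChart (f : V →ₗ[K] K) : Set (ℙ K V) := {x | f x.rep ≠ 0}

/-- The affine coordinate of a point `x` of the chart of `f`: its representative `v` with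
`f v = 1`. Outside of the chart it takes the junk value `0`. -/
noncomputable def affineCoord (f : V →ₗ[K] K) (x : ℙ K V) : V := (f x.rep)⁻¹ • x.rep

theorem mk_mem_affineChart {v : V} (hv : v ≠ 0) :
    Projectivization.mk K v hv ∈ affineChart f ↔ f v ≠ 0 := by
  obtain ⟨a, ha⟩ := Projectivization.exists_smul_eq_mk_rep K v hv
  simp [affineChart, ← ha, Units.smul_def]

theorem affineCoord_mk {v : V} (hv : v ≠ 0) :
    affineCoord f (Projectivization.mk K v hv) = (f v)⁻¹ • v := by
  obtain ⟨a, ha⟩ := Projectivization.exists_smul_eq_mk_rep K v hv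
  simp [affineCoord, ← ha, Units.smul_def, smul_smul]

theorem map_affineCoord {x : ℙ K V} (hx : x ∈ affineChart f) : f (affineCoord f x) = 1 := by
  rw [affineCoord, map_smul, smul_eq_mul, inv_mul_cancel₀ hx]

theorem ne_zero_of_map_eq_one {v : V} (hv : f v = 1) : v ≠ 0 := by
  rintro rfl
  simp at hv

theorem mk_affineCoord {x : ℙ K V} (hx : x ∈ affineChart f) :
    Projectivization.mk K (affineCoord f x) (ne_zero_of_map_eq_one (map_affineCoord hx)) = x := by
  conv_rhs => rw [← x.mk_rep]
  exact (Projectivization.mk_eq_mk_iff' ..).2 ⟨(f x.rep)⁻¹, rfl⟩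

variable [TopologicalSpace V]

theorem isQuotientMap_projectivization_mk' :
    Topology.IsQuotientMap (Projectivization.mk' K : {v : V // v ≠ 0} → ℙ K V) :=
  isQuotientMap_quot_mk

variable [TopologicalSpace K]

theorem isOpen_affineChart [T1Space K] (hf : Continuous f) : IsOpen (affineChart f) := by
  rw [← isQuotientMap_projectivization_mk'.isOpen_preimage]
  have hpre : Projectivization.mk' K ⁻¹' affineChart f = {v : {v : V // v ≠ 0} | f v ≠ 0} :=
    Set.ext fun v => mk_mem_affineChart v.2
  rw [hpre]
  exact isOpen_compl_singleton.preimage (hf.comp continuous_subtype_val)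

theorem continuousOn_affineCoord [T1Space K] [ContinuousInv₀ K] [ContinuousSMul K V]
    (hf : Continuous f) : ContinuousOn (affineCoord f) (affineChart f) := by
  rw [isQuotientMap_projectivization_mk'.continuousOn_isOpen_iff (isOpen_affineChart hf)]
  have hcoord : affineCoord f ∘ Projectivization.mk' K =
      fun v : {v : V // v ≠ 0} => (f v)⁻¹ • (v : V) :=
    funext fun v => affineCoord_mk v.2
  rw [hcoord]
  have hfv : Continuous fun v : {v : V // v ≠ 0} => f v := hf.comp continuous_subtype_val
  exact (hfv.continuousOn.inv₀ fun v hv => (mk_mem_affineChart v.2).1 hv).smul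
    continuous_subtype_val.continuousOn

end AffineChart

section ConeProjection

open QuadraticMap

variable {R V : Type*} [CommRing R] [AddCommGroup V] [Module R V] {Q : QuadraticForm R V} {p v : V}

/-- Translation of `v` along `p`, by the amount that lands on the isotropic cone of `Q` when `p` is
isotropic and `polar Q p v = 1`: a stereographic projection with centre `p`. -/
def coneProjection (Q : QuadraticForm R V) (p v : V) : V := v - Q v • p

theorem coneProjection_of_map_eq_zero (hv : Q v = 0) : coneProjection Q p v = v := by
  simp [coneProjection, hv]

theorem polar_self_eq_zero (hp : Q p = 0) : polar Q p p = 0 := by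
  simp [polar_self, hp]

theorem polar_coneProjection (hp : Q p = 0) : polar Q p (coneProjection Q p v) = polar Q p v := by
  simp [coneProjection, polar_sub_right, polar_smul_right, polar_self_eq_zero hp]

theorem map_coneProjection (hp : Q p = 0) (hv : polar Q p v = 1) :
    Q (coneProjection Q p v) = 0 := by
  have expand := QuadraticMap.map_add Q v (-(Q v • p))
  simpa [coneProjection, sub_eq_add_neg, QuadraticMap.map_smul, hp, polar_smul_right,
    polar_comm Q v p, hv] using expand

theorem exists_polynomial_eval_eq_map_lineMap (Q : QuadraticForm R V) (v w : V) :
    ∃ P : Polynomial R, ∀ t, P.eval t = Q (AffineMap.lineMap v w t) := by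
  refine ⟨.C (Q (w - v)) * .X ^ 2 + .C (polar Q (w - v) v) * .X + .C (Q v), fun t => ?_⟩
  simp only [Polynomial.eval_add, Polynomial.eval_mul, Polynomial.eval_C, Polynomial.eval_X,
    Polynomial.eval_pow, AffineMap.lineMap_apply_module', QuadraticMap.map_add Q,
    QuadraticMap.map_smul, polar_smul_left, smul_eq_mul]
  ring

theorem exists_polynomial_eval_eq_polar_coneProjection_lineMap (Q : QuadraticForm R V)
    (p p' v w : V) :
    ∃ P : Polynomial R, ∀ t,
      P.eval t = polar Q p' (coneProjection Q p (AffineMap.lineMap v w t)) := by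
  obtain ⟨P, hP⟩ := exists_polynomial_eval_eq_map_lineMap Q v w
  refine ⟨.C (polar Q p' (w - v)) * .X + .C (polar Q p' v) - P * .C (polar Q p' p), fun t => ?_⟩
  simp only [coneProjection, polar_sub_right, polar_smul_right, smul_eq_mul, Polynomial.eval_sub,
    Polynomial.eval_add, Polynomial.eval_mul, Polynomial.eval_C, Polynomial.eval_X, hP,
    AffineMap.lineMap_apply_module', polar_add_right]
  ring

end ConeProjection

section IsotropicVectors

open QuadraticMap

variable {K V : Type*} [Field K] [AddCommGroup V] [Module K V] {Q : QuadraticForm K V}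

theorem exists_ne_zero_map_eq_zero [IsAlgClosed K] [NeZero (2 : K)] (Q : QuadraticForm K V)
    (hrank : 1 < Module.rank K V) : ∃ v ≠ 0, Q v = 0 := by
  obtain ⟨x, hx⟩ := rank_pos_iff_exists_ne_zero.1 (zero_lt_one.trans hrank)
  obtain ⟨y, hxy⟩ := exists_linearIndependent_pair_of_one_lt_rank hrank hx
  by_cases hy : Q y = 0
  · exact ⟨y, hxy.ne_zero 1, hy⟩
  obtain ⟨t, ht⟩ := exists_quadratic_eq_zero hy
    (IsAlgClosed.exists_eq_mul_self (discrim (Q y) (polar Q x y) (Q x)))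
  refine ⟨x + t • y, fun h => ?_, ?_⟩
  · have := LinearIndependent.pair_iff.1 hxy 1 t (by simpa using h)
    exact one_ne_zero this.1
  · rw [QuadraticMap.map_add Q, QuadraticMap.map_smul, polar_smul_right]
    simp only [smul_eq_mul]
    linear_combination ht

theorem exists_isotropic_polar_eq_one (hQ : Q.polarBilin.SeparatingLeft) {x : V} (hx : x ≠ 0)
    (hQx : Q x = 0) : ∃ u, Q u = 0 ∧ polar Q x u = 1 := by
  obtain ⟨y, hy⟩ : ∃ y, polar Q x y ≠ 0 := by
    contrapose! hx
    exact hQ x hx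
  have hpolar : polar Q x ((polar Q x y)⁻¹ • y) = 1 := by
    rw [polar_smul_right, smul_eq_mul, inv_mul_cancel₀ hy]
  exact ⟨_, map_coneProjection hQx hpolar, (polar_coneProjection hQx).trans hpolar⟩

theorem eq_zero_of_polar_eq_zero (hQ : Q.polarBilin.SeparatingLeft) {x u y : V}
    (hxu : polar Q x u = 1) (hyu : polar Q y u = 0)
    (hy : ∀ w, polar Q x w = 0 → polar Q y w = 0) : y = 0 := by
  refine hQ y fun z => ?_
  have := hy (z - polar Q x z • u) (by simp [polar_sub_right, polar_smul_right, hxu])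
  simpa [polar_sub_right, polar_smul_right, hyu] using this

theorem exists_polar_eq_zero_map_ne_zero (hQ : Q.polarBilin.SeparatingLeft)
    (hrank : 3 ≤ Module.rank K V) {x u : V} (hxu : polar Q x u = 1) :
    ∃ w, polar Q x w = 0 ∧ Q w ≠ 0 := by
  by_contra! h
  have orthogonal_mem_span (w : V) (hw : polar Q x w = 0) : w = polar Q w u • x := by
    refine sub_eq_zero.1 (eq_zero_of_polar_eq_zero hQ hxu ?_ fun w' hw' => ?_)
    · simp [polar_sub_left, polar_smul_left, hxu]
    · have hww' : Q (w + w') = 0 := h _ (by rw [polar_add_right, hw, hw', add_zero])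
      have : polar Q w w' = 0 := by simp [polar, hww', h w hw, h w' hw']
      simp [polar_sub_left, polar_smul_left, hw', this]
  classical
  have span_eq_top : Submodule.span K (({u, x} : Finset V) : Set V) = ⊤ := by
    refine Submodule.eq_top_iff'.2 fun z => ?_
    rw [Finset.coe_pair, Submodule.mem_span_pair]
    have := orthogonal_mem_span (z - polar Q x z • u)
      (by simp [polar_sub_right, polar_smul_right, hxu])
    exact ⟨_, _, (sub_eq_iff_eq_add'.1 this).symm⟩
  have rank_le_two : Module.rank K V ≤ 2 := by
    rw [← rank_top, ← span_eq_top]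
    exact (rank_span_finset_le _).trans (mod_cast Finset.card_le_two)
  exact absurd (hrank.trans rank_le_two) (by norm_num)

theorem exists_isotropic_polar_ne_zero [NeZero (2 : K)] (hQ : Q.polarBilin.SeparatingLeft)
    (hrank : 3 ≤ Module.rank K V) {x y : V} (hx : x ≠ 0) (hQx : Q x = 0) (hy : y ≠ 0) :
    ∃ p, Q p = 0 ∧ polar Q p x ≠ 0 ∧ polar Q p y ≠ 0 := by
  obtain ⟨u, hQu, hxu⟩ := exists_isotropic_polar_eq_one hQ hx hQx
  obtain ⟨w₀, hxw₀, hQw₀⟩ := exists_polar_eq_zero_map_ne_zero hQ hrank hxu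
  by_contra! h
  have polar_y (w : V) (hw : polar Q x w = 0) :
      polar Q y u + polar Q y w = (Q w + polar Q u w) * polar Q y x := by
    have hpolar : polar Q x (u + w) = 1 := by rw [polar_add_right, hxu, hw, add_zero]
    have := h _ (map_coneProjection hQx hpolar)
      (by rw [polar_comm, polar_coneProjection hQx, hpolar]; exact one_ne_zero)
    rw [polar_comm, coneProjection, QuadraticMap.map_add Q u w, hQu] at this
    simp only [polar_sub_right, polar_add_right, polar_smul_right, smul_eq_mul] at this
    linear_combination this
  have hyu : polar Q y u = 0 := by simpa using polar_y 0 (by simp)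
  -- The quadratic part in `w` of `polar_y` is isolated by adding its instances at `w₀` and `-w₀`.
  have hyx : polar Q y x = 0 := by
    have hneg := polar_y (-w₀) (by simp [hxw₀])
    simp only [polar_neg_right, QuadraticMap.map_neg] at hneg
    have : (2 * Q w₀) * polar Q y x = 0 := by
      linear_combination 2 * hyu - hneg - polar_y w₀ hxw₀
    simpa [hQw₀, NeZero.ne] using this
  exact hy (eq_zero_of_polar_eq_zero hQ hxu hyu fun w hw => by simpa [hyu, hyx] using polar_y w hw)

end IsotropicVectors

section ProjectiveQuadric

open QuadraticMap

variable {K V : Type*} [Field K] [AddCommGroup V] [Module K V] {Q : QuadraticForm K V} {p : V}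

/-- The projective quadric `{[v] : Q v = 0}` of a quadratic form `Q`. -/
def projectiveQuadric (Q : QuadraticForm K V) : Set (ℙ K V) := {x | Q x.rep = 0}

theorem mk_mem_projectiveQuadric {v : V} (hv : v ≠ 0) :
    Projectivization.mk K v hv ∈ projectiveQuadric Q ↔ Q v = 0 := by
  obtain ⟨a, ha⟩ := Projectivization.exists_smul_eq_mk_rep K v hv
  simp [projectiveQuadric, ← ha, Units.smul_def, QuadraticMap.map_smul]

/-- The part of the projective quadric that lies off the hyperplane polar to `p`. -/
def quadricChart (Q : QuadraticForm K V) (p : V) : Set (projectiveQuadric Q) :=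
  Subtype.val ⁻¹' affineChart (Q.polarBilin p)

theorem map_affineCoord_eq_zero (f : V →ₗ[K] K) (x : projectiveQuadric Q) :
    Q (affineCoord f x) = 0 := by
  rw [affineCoord, QuadraticMap.map_smul, show Q x.1.rep = 0 from x.2, smul_zero]

theorem polar_coneProjection_eq_one (hp : Q p = 0) (v : {v : V // polar Q p v = 1}) :
    Q.polarBilin p (coneProjection Q p v) = 1 :=
  (polar_coneProjection hp).trans v.2

/-- The parametrization of the chart of an isotropic vector `p` by the affine hyperplane
`polar Q p v = 1`. It is surjective but not injective, as it identifies `v` with `v + c • p`. -/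
def quadricParam (hp : Q p = 0) (v : {v : V // polar Q p v = 1}) : projectiveQuadric Q :=
  ⟨Projectivization.mk K (coneProjection Q p v)
      (ne_zero_of_map_eq_one (polar_coneProjection_eq_one hp v)),
    (mk_mem_projectiveQuadric _).2 (map_coneProjection hp v.2)⟩

theorem quadricParam_mem_quadricChart_iff (hp : Q p = 0) (v : {v : V // polar Q p v = 1})
    {p' : V} :
    quadricParam hp v ∈ quadricChart Q p' ↔ polar Q p' (coneProjection Q p v) ≠ 0 :=
  mk_mem_affineChart _

theorem quadricParam_mem_quadricChart (hp : Q p = 0) (v : {v : V // polar Q p v = 1}) :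
    quadricParam hp v ∈ quadricChart Q p :=
  (quadricParam_mem_quadricChart_iff hp v).2 <|
    (polar_coneProjection_eq_one hp v).trans_ne one_ne_zero

theorem quadricParam_affineCoord (hp : Q p = 0) {x : projectiveQuadric Q}
    (hx : x ∈ quadricChart Q p) :
    quadricParam hp ⟨affineCoord (Q.polarBilin p) x, map_affineCoord hx⟩ = x := by
  refine Subtype.ext (Eq.trans ?_ (mk_affineCoord hx))
  simp only [quadricParam, coneProjection_of_map_eq_zero (map_affineCoord_eq_zero _ x)]

theorem exists_mem_quadricChart [NeZero (2 : K)] (hQ : Q.polarBilin.SeparatingLeft)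
    (hrank : 3 ≤ Module.rank K V) (x y : projectiveQuadric Q) :
    ∃ p, Q p = 0 ∧ x ∈ quadricChart Q p ∧ y ∈ quadricChart Q p :=
  exists_isotropic_polar_ne_zero hQ hrank x.1.rep_nonzero x.2 y.1.rep_nonzero

variable [TopologicalSpace K] [TopologicalSpace V] [IsTopologicalAddGroup V]

theorem continuous_polar [IsTopologicalAddGroup K] (hQ : Continuous Q) (p : V) :
    Continuous (polar Q p) := by
  unfold polar
  fun_prop

theorem continuous_quadricParam [ContinuousSMul K V] (hQ : Continuous Q) (hp : Q p = 0) :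
    Continuous (quadricParam hp) := by
  refine Continuous.subtype_mk (isQuotientMap_projectivization_mk'.continuous.comp
    (Continuous.subtype_mk ?_ _)) _
  unfold coneProjection
  fun_prop

end ProjectiveQuadric

section ComplexQuadric

open QuadraticMap

theorem joinedIn_eval_ne_zero (P : Polynomial ℂ) {a b : ℂ} (ha : P.eval a ≠ 0)
    (hb : P.eval b ≠ 0) : JoinedIn {t | P.eval t ≠ 0} a b := by
  have hP : P ≠ 0 := by
    rintro rfl
    simp at ha
  have hroots : {t | P.eval t = 0}.Countable := (Polynomial.finite_setOfPred_isRoot hP).countable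
  exact (hroots.isPathConnected_compl_of_one_lt_rank (by simp)).joinedIn a ha b hb

variable {V : Type*} [AddCommGroup V] [Module ℂ V] [TopologicalSpace V] [IsTopologicalAddGroup V]
  {Q : QuadraticForm ℂ V} {p : V}

theorem isOpen_quadricChart (hQ : Continuous Q) (p : V) : IsOpen (quadricChart Q p) :=
  (isOpen_affineChart (continuous_polar hQ p)).preimage continuous_subtype_val

variable [ContinuousSMul ℂ V]

theorem isSimplyConnected_quadricChart (hQ : Continuous Q) (hp : Q p = 0)
    (hne : (quadricChart Q p).Nonempty) : IsSimplyConnected (quadricChart Q p) := by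
  have : ContinuousSMul ℝ V := IsScalarTower.continuousSMul ℂ
  have hconvex : Convex ℝ {v | polar Q p v = 1} :=
    (convex_singleton (1 : ℂ)).linear_preimage ((Q.polarBilin p).restrictScalars ℝ)
  have : ContractibleSpace {v // polar Q p v = 1} :=
    hconvex.contractibleSpace
      (let ⟨x, hx⟩ := hne; ⟨affineCoord (Q.polarBilin p) x, map_affineCoord hx⟩)
  let param : C({v // polar Q p v = 1}, quadricChart Q p) :=
    ⟨fun v => ⟨quadricParam hp v, quadricParam_mem_quadricChart hp v⟩,
      (continuous_quadricParam hQ hp).subtype_mk _⟩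
  let coord : C(quadricChart Q p, {v // polar Q p v = 1}) :=
    ⟨fun x => ⟨affineCoord (Q.polarBilin p) x.1, map_affineCoord x.2⟩, by
      refine Continuous.subtype_mk ?_ _
      exact (continuousOn_affineCoord (continuous_polar hQ p)).comp_continuous
        (continuous_subtype_val.comp continuous_subtype_val) fun x => x.2⟩
  have := contractibleSpace_of_leftInverse param coord fun x =>
    Subtype.ext (quadricParam_affineCoord hp x.2)
  exact SimplyConnectedSpace.ofContractible _

theorem isPathConnected_quadricChart_inter (hQ : Continuous Q) (hp : Q p = 0) {p' : V}
    (hne : (quadricChart Q p ∩ quadricChart Q p').Nonempty) :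
    IsPathConnected (quadricChart Q p ∩ quadricChart Q p') := by
  refine isPathConnected_iff.2 ⟨hne, fun x ⟨hx, hx'⟩ y ⟨hy, hy'⟩ => ?_⟩
  let coord (z : projectiveQuadric Q) : V := affineCoord (Q.polarBilin p) z
  have polar_line (t : ℂ) : polar Q p (AffineMap.lineMap (coord x) (coord y) t) = 1 := by
    have hx₁ : polar Q p (coord x) = 1 := map_affineCoord hx
    have hy₁ : polar Q p (coord y) = 1 := map_affineCoord hy
    simp [AffineMap.lineMap_apply_module', polar_add_right, polar_smul_right, polar_sub_right,
      hx₁, hy₁]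
  let line (t : ℂ) : projectiveQuadric Q := quadricParam hp ⟨_, polar_line t⟩
  have line_zero : line 0 = x := by
    simpa [line] using quadricParam_affineCoord hp hx
  have line_one : line 1 = y := by
    simpa [line] using quadricParam_affineCoord hp hy
  have continuous_line : Continuous line :=
    (continuous_quadricParam hQ hp).comp (AffineMap.lineMap_continuous.subtype_mk _)
  obtain ⟨P, hP⟩ :=
    exists_polynomial_eval_eq_polar_coneProjection_lineMap Q p p' (coord x) (coord y)
  have line_mem (t : ℂ) : line t ∈ quadricChart Q p' ↔ P.eval t ≠ 0 := by
    rw [hP, quadricParam_mem_quadricChart_iff]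
  have joined := joinedIn_eval_ne_zero P ((line_mem 0).1 (line_zero ▸ hx'))
    ((line_mem 1).1 (line_one ▸ hy'))
  rw [← line_zero, ← line_one]
  exact (joined.map continuous_line).mono <| Set.image_subset_iff.2 fun t ht =>
    ⟨quadricParam_mem_quadricChart hp _, (line_mem t).2 ht⟩

theorem statement8_general (Q : QuadraticForm ℂ V) (hcont : Continuous Q) (hQ : Q.Nondegenerate)
    (hrank : 3 ≤ Module.rank ℂ V) : SimplyConnectedSpace (projectiveQuadric Q) := by
  have hsep : Q.polarBilin.SeparatingLeft := (nondegenerate_polar_iff.2 hQ).1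
  obtain ⟨v, hv, hQv⟩ := exists_ne_zero_map_eq_zero Q (lt_of_lt_of_le (by norm_num) hrank)
  let x₀ : projectiveQuadric Q := ⟨.mk ℂ v hv, (mk_mem_projectiveQuadric hv).2 hQv⟩
  refine simplyConnectedSpace_of_isOpen_cover (x₀ := x₀)
    (U := fun p : {p // Q p = 0 ∧ x₀ ∈ quadricChart Q p} => quadricChart Q p) ?_ ?_ ?_ ?_ ?_
  · exact fun p => isOpen_quadricChart hcont p
  · intro x
    obtain ⟨p, hp, hx₀, hx⟩ := exists_mem_quadricChart hsep hrank x₀ x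
    exact ⟨⟨p, hp, hx₀⟩, hx⟩
  · exact fun ⟨p, hp, hx₀⟩ => isSimplyConnected_quadricChart hcont hp ⟨x₀, hx₀⟩
  · exact fun ⟨p, hp, hx₀⟩ ⟨p', _, hx₀'⟩ =>
      isPathConnected_quadricChart_inter hcont hp ⟨x₀, hx₀, hx₀'⟩
  · exact fun p => p.2.2

end ComplexQuadric

theorem hyperquadric_eq_projectiveQuadric (n : ℕ) :
    hyperquadric n = projectiveQuadric (QuadraticMap.weightedSumSquares ℂ (1 : Fin n → ℂ)) := by
  ext x
  constructor
  · rintro ⟨z, hz, hsum, rfl⟩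
    exact (mk_mem_projectiveQuadric hz).2 (by simpa [sq] using hsum)
  · intro hx
    exact ⟨x.rep, x.rep_nonzero, by simpa [projectiveQuadric, sq] using hx, x.mk_rep⟩

theorem nondegenerate_weightedSumSquares_one {K ι : Type*} [Field K] [Invertible (2 : K)]
    [Fintype ι] : (QuadraticMap.weightedSumSquares K (1 : ι → K)).Nondegenerate := by
  have : NeZero (2 : K) := ⟨Invertible.ne_zero 2⟩
  rw [QuadraticMap.nondegenerate_iff_radical_eq_bot, QuadraticForm.radical_weightedSumSquares]
  simp [Pi.spanSubset]

theorem continuous_weightedSumSquares {R ι : Type*} [CommSemiring R] [TopologicalSpace R]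
    [IsTopologicalSemiring R] [Fintype ι] (w : ι → R) :
    Continuous (QuadraticMap.weightedSumSquares R w) := by
  have : Continuous fun v : ι → R => ∑ i, w i • (v i * v i) := by fun_prop
  exact this.congr fun v => (QuadraticMap.weightedSumSquares_apply w v).symm

/-- For every `n ≥ 3` the hyperquadric `𝐐^{n-2} ⊂ ℂℙ^{n-1}`, with the
subspace topology, is nonempty, path connected, and simply connected. -/
theorem statement8 (n : ℕ) (hn : 3 ≤ n) :
    Nonempty (hyperquadric n) ∧ PathConnectedSpace (hyperquadric n) ∧
      SimplyConnectedSpace (hyperquadric n) := by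
  have : SimplyConnectedSpace (hyperquadric n) := by
    rw [hyperquadric_eq_projectiveQuadric]
    exact statement8_general _ (continuous_weightedSumSquares 1)
      nondegenerate_weightedSumSquares_one (by simpa using hn)
  exact ⟨inferInstance, inferInstance, this⟩
end
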